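/- Johansson's central limit theorem for linear statistics on U(n): Let V be a real-valued integrable function on the unit circle with Fourier coefficients satisfying ∑_{k=-∞}^{∞} |k|·|V_k|² < ∞ and V_0 = (1/2π)∫_{-π}^{π} V(e^{iθ}) dθ = 0. For g in the unitary group U(n) with eigenvalues e^{iθ_1(g)}, …, e^{iθ_n(g)} (counted with multiplicity), set F_n(g) = ∑_{j=1}^{n} V(e^{iθ_j(g)}). Then, with U(n) equipped with normalized Haar measure, the law of F_n converges weakly, as n → ∞, to the normal distribution N(0, σ²) with variance σ² = 2·∑_{k=1}^{∞} k·|V_k|². -/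

import Mathlib

/-!
By Lévy's continuity theorem it suffices to prove that the characteristic functions of `F_n`
converge pointwise to `exp (-t²σ²/2)`. The proof combines a Stein-type argument for trigonometric
polynomials with a truncation estimate that is uniform in `n`.

For a trigonometric polynomial with real values the statistic is `T = ∑_k a_k tr g^k`. Invariance of
the Haar measure under `g ↦ exp (tX) g` gives an integration by parts formula (`schwinger_dyson`):
for each exponent `c`,
`E[(∑_{l < c} tr g^l · tr g^{c-l}) Ψ + tr (g^c ∇Ψ)] = 0`.
Applied to `Ψ = exp (itT)`, its terms of order `n` give
`E[tr g^k e^{itT}] = it |k| a_{-k} E[e^{itT}] + O(1/n)` (`stein_int`). Hence the characteristic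
function `φ` of `T` solves `φ' = -t σ_T² φ + O(1/n)` with `σ_T² = ∑_k |k| |a_k|²`, and integrating
this equation gives `charFun_trigStat`.

Both the error terms above and the truncation rest on the second moment
`E |tr g^k|² = min n k ≤ k` (`integral_ptr_sq`), which is again obtained from integration by parts.
Write `h_a` for the complete homogeneous and `ε_r = (-1)^r e_r` for the signed elementary symmetric
functions of the eigenvalues, and `p_k = tr g^k`. The vector field `∑_{c ≤ a} h_{a-c} g^c` acts on
these functions in closed form (`div_h`, `div_eps`), so that the numbers `E[ε_r h_a conj p_{r+a}]`
satisfy a triangular linear system (`Y_eq`). Together with `ε_r = 0` for `r > n` the system has a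
unique solution (`solve_Y`), and `p_k = -∑_r r ε_r h_{k-r}` yields the second moment.

For a general `V`, square summability of the coefficients and uniqueness of Fourier coefficients give
`V ∈ L²`. Since the mean eigenvalue measure is `n` times Haar measure on the circle (`bind_eigMeas`),
for fixed `n` the statistics of the Fourier partial sums converge in `L¹` to `F_n`. By orthogonality
of the `tr g^k` and the second moment bound, truncation at frequency `K` therefore costs at most
`(∑_{|k| > K} |k| |V_k|²)^{1/2}` in `L¹`, uniformly in `n`
(`integral_norm_linearStatistic_sub_le`).
-/

open MeasureTheory Filter Topology

noncomputable instance (n : ℕ) : MeasurableSpace (Matrix.unitaryGroup (Fin n) ℂ) :=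
  borel _

/-- The `ℓ`-th Fourier coefficient of a function `θ ↦ V(e^{iθ})` on the unit circle. -/
noncomputable def fourierCoeff' (V : ℝ → ℂ) (ℓ : ℤ) : ℂ :=
  ((2 * Real.pi : ℝ) : ℂ)⁻¹ *
    ∫ θ in (-Real.pi)..Real.pi, Complex.exp (-Complex.I * (ℓ : ℂ) * (θ : ℂ)) * V θ

/-- The linear statistic `F_n(g) = ∑_j V(e^{iθ_j(g)})`, summing the 2π-periodic function
`V` over the eigenvalue angles of `g ∈ U(n)` (the roots of the characteristic
polynomial, counted with multiplicity). -/
noncomputable def linearStatistic (V : ℝ → ℝ) {n : ℕ}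
    (g : Matrix.unitaryGroup (Fin n) ℂ) : ℝ :=
  (((g : Matrix (Fin n) (Fin n) ℂ).charpoly.roots).map fun z => V z.arg).sum

/-! ### Symmetric functions expressed through power sums -/

/-- The sequence `x` with `x 0 = 1` and `r * x r = s * ∑_{j < r} p (j+1) * x (r-1-j)`. When `p`
is the sequence of power sums, `s = 1` gives the complete homogeneous polynomials `h_r` and
`s = -1` gives the signed elementary polynomials `ε_r = (-1)^r e_r` (Newton's identities). -/
noncomputable def symSeq (s : ℂ) (p : ℕ → ℂ) : ℕ → ℂ
  | 0 => 1
  | r + 1 => s / ((r : ℂ) + 1) * ∑ j : Fin (r + 1), p (j + 1) * symSeq s p (r - j)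
  decreasing_by omega

lemma symSeq_zero (s : ℂ) (p : ℕ → ℂ) : symSeq s p 0 = 1 := by rw [symSeq]

lemma symSeq_succ (s : ℂ) (p : ℕ → ℂ) (r : ℕ) : symSeq s p (r + 1) =
    s / ((r : ℂ) + 1) * ∑ j ∈ Finset.range (r + 1), p (j + 1) * symSeq s p (r - j) := by
  rw [symSeq, Finset.sum_range]

lemma symSeq_rec (s : ℂ) (p : ℕ → ℂ) (r : ℕ) : (r : ℂ) * symSeq s p r =
    s * ∑ j ∈ Finset.range r, p (j + 1) * symSeq s p (r - 1 - j) := by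
  cases r with
  | zero => simp
  | succ r =>
    have : (r : ℂ) + 1 ≠ 0 := by exact_mod_cast Nat.succ_ne_zero r
    rw [symSeq_succ]
    push_cast
    field_simp

/-- Counting the pairs `(c, j)` on each antidiagonal `c + j = m`. -/
lemma sum_triangle (f : ℕ → ℂ) (a : ℕ) :
    ∑ c ∈ Finset.range (a + 1), ∑ j ∈ Finset.range (a - c), f (c + j)
      = ∑ m ∈ Finset.range a, ((m : ℂ) + 1) * f m := by
  induction a with
  | zero => simp
  | succ a ih =>
    rw [Finset.sum_range_succ, Finset.sum_range_succ (fun m => ((m : ℂ) + 1) * f m), ← ih]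
    have : ∀ c ∈ Finset.range (a + 1), ∑ j ∈ Finset.range (a + 1 - c), f (c + j)
        = ∑ j ∈ Finset.range (a - c), f (c + j) + f a := by
      intro c hc
      have hc' : c ≤ a := by simpa [Nat.lt_succ_iff] using hc
      rw [Nat.succ_sub hc', Finset.sum_range_succ, Nat.add_sub_cancel' hc']
    rw [Finset.sum_congr rfl this, Finset.sum_add_distrib]
    simp

/-- The reindexing `(c, l) ↦ (l, c - l)` of a triangular sum. -/
lemma sum_triangle_swap (f : ℕ → ℕ → ℂ) (a : ℕ) :
    ∑ c ∈ Finset.range (a + 1), ∑ l ∈ Finset.range c, f l (c - l)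
      = ∑ l ∈ Finset.range (a + 1), ∑ i ∈ Finset.range (a - l), f l (i + 1) := by
  induction a with
  | zero => simp
  | succ a ih =>
    rw [Finset.sum_range_succ, ih, Finset.sum_range_succ _ (a + 1)]
    have : ∀ c ∈ Finset.range (a + 1), ∑ j ∈ Finset.range (a + 1 - c), f c (j + 1)
        = ∑ j ∈ Finset.range (a - c), f c (j + 1) + f c (a + 1 - c) := by
      intro c hc
      have hc' : c ≤ a := by simpa [Nat.lt_succ_iff] using hc
      rw [Nat.succ_sub hc', Finset.sum_range_succ]
    rw [Finset.sum_congr rfl this, Finset.sum_add_distrib]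
    simp

/-- The coefficient `∑_{l < c} p_l p_{c-l}`. For `p l = tr g^l` it is the divergence on `U(n)` of
the left-trivialized vector field `g ↦ g^c`, and this is how it enters `schwinger_dyson`. -/
noncomputable def divCoeff (p : ℕ → ℂ) (c : ℕ) : ℂ := ∑ l ∈ Finset.range c, p l * p (c - l)

/-- The divergence of the field `g ↦ ∑_{c ≤ a} h_{a-c}(g) g^c` is a multiple of `h_a`. -/
lemma div_h (p : ℕ → ℂ) (a : ℕ) :
    ∑ c ∈ Finset.range (a + 1), (divCoeff p c * symSeq 1 p (a - c) +
      ∑ j ∈ Finset.range (a - c), p (c + j + 1) * symSeq 1 p (a - c - 1 - j)) =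
    a * (p 0 + a) * symSeq 1 p a := by
  have e1 : ∑ c ∈ Finset.range (a + 1), ∑ j ∈ Finset.range (a - c),
      p (c + j + 1) * symSeq 1 p (a - c - 1 - j) =
      ∑ m ∈ Finset.range a, ((m : ℂ) + 1) * (p (m + 1) * symSeq 1 p (a - 1 - m)) := by
    rw [← sum_triangle (fun m => p (m + 1) * symSeq 1 p (a - 1 - m))]
    refine Finset.sum_congr rfl fun c _ => Finset.sum_congr rfl fun j _ => ?_
    congr 2; omega
  have e2 : ∑ c ∈ Finset.range (a + 1), divCoeff p c * symSeq 1 p (a - c) =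
      ∑ l ∈ Finset.range (a + 1), p l * (((a - l : ℕ) : ℂ) * symSeq 1 p (a - l)) := by
    have h1 : ∀ c ∈ Finset.range (a + 1), divCoeff p c * symSeq 1 p (a - c) =
        ∑ l ∈ Finset.range c, p l * p (c - l) * symSeq 1 p (a - l - (c - l)) := by
      intro c hc
      rw [divCoeff, Finset.sum_mul]
      refine Finset.sum_congr rfl fun l hl => ?_
      have := Finset.mem_range.1 hl
      congr 2; omega
    rw [Finset.sum_congr rfl h1,
      sum_triangle_swap (fun l i => p l * p i * symSeq 1 p (a - l - i))]
    refine Finset.sum_congr rfl fun l _ => ?_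
    rw [symSeq_rec, one_mul, Finset.mul_sum]
    refine Finset.sum_congr rfl fun i _ => ?_
    rw [mul_assoc]; congr 3; omega
  rw [Finset.sum_add_distrib, e1, e2, Finset.sum_range_succ', Nat.sub_zero]
  have e3 : ∀ m ∈ Finset.range a, p (m + 1) * (((a - (m + 1) : ℕ) : ℂ) * symSeq 1 p (a - (m + 1)))
      + ((m : ℂ) + 1) * (p (m + 1) * symSeq 1 p (a - 1 - m)) =
      a * (p (m + 1) * symSeq 1 p (a - 1 - m)) := by
    intro m hm
    have := Finset.mem_range.1 hm
    rw [Nat.cast_sub (by omega), show a - (m + 1) = a - 1 - m by omega]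
    push_cast; ring
  have e4 := symSeq_rec 1 p a
  rw [one_mul] at e4
  rw [add_right_comm, ← Finset.sum_add_distrib, Finset.sum_congr rfl e3, ← Finset.mul_sum, ← e4]
  ring

/-- Up to sign, the left side is the derivative of `ε_r` along `g ↦ ∑_{c ≤ a} h_{a-c}(g) g^c`:
the derivative is a sum of products `ε_{r+j} h_{a-j}`. -/
lemma div_eps (p : ℕ → ℂ) (a r : ℕ) :
    ∑ c ∈ Finset.range (a + 1), symSeq 1 p (a - c) *
      ∑ j ∈ Finset.range r, p (c + j + 1) * symSeq (-1) p (r - 1 - j) =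
    -((r : ℂ) + a) * ∑ j ∈ Finset.range (a + 1), symSeq (-1) p (r + j) * symSeq 1 p (a - j) := by
  induction a generalizing r with
  | zero =>
    have := symSeq_rec (-1) p r
    simp [symSeq_zero] at *
    linear_combination this
  | succ a ih =>
    have e1 := symSeq_rec (-1) p r
    have e2 := symSeq_rec 1 p (a + 1)
    have h := ih (r + 1)
    -- Both sums for `a + 1` are those for `(a, r + 1)` plus the term `c = 0`, resp. `j = 0`;
    -- the remaining terms recombine by the recursions for `ε_r` and `h_{a+1}`.
    rw [Finset.sum_range_succ', Finset.sum_range_succ' _ (a + 1)]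
    have h2 : ∀ c ∈ Finset.range (a + 1), symSeq 1 p (a - c) *
        ∑ j ∈ Finset.range (r + 1), p (c + j + 1) * symSeq (-1) p (r + 1 - 1 - j) =
        symSeq 1 p (a + 1 - (c + 1)) *
          ∑ j ∈ Finset.range r, p (c + 1 + j + 1) * symSeq (-1) p (r - 1 - j)
        + p (c + 1) * symSeq 1 p (a + 1 - 1 - c) * symSeq (-1) p r := by
      intro c _
      rw [Finset.sum_range_succ', mul_add]
      congr 1
      · rw [show a + 1 - (c + 1) = a - c by omega]
        congr 1
        refine Finset.sum_congr rfl fun j _ => ?_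
        congr 2
        · ring
        · omega
      · simp; ring
    rw [Finset.sum_congr rfl h2, Finset.sum_add_distrib, ← Finset.sum_mul] at h
    have h3 : ∀ j ∈ Finset.range (a + 1), symSeq (-1) p (r + 1 + j) * symSeq 1 p (a - j) =
        symSeq (-1) p (r + (j + 1)) * symSeq 1 p (a + 1 - (j + 1)) := by
      intro j _
      rw [show a + 1 - (j + 1) = a - j by omega, show r + 1 + j = r + (j + 1) by ring]
    rw [Finset.sum_congr rfl h3] at h
    simp only [zero_add, Nat.sub_zero, add_zero]
    push_cast at *
    linear_combination h + symSeq 1 p (a+1) * e1 + symSeq (-1) p r * e2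

/-- The generating functions of `ε` and `h` are inverse to each other. -/
lemma conv_zero (p : ℕ → ℂ) (k : ℕ) (hk : k ≠ 0) :
    ∑ j ∈ Finset.range (k + 1), symSeq (-1) p j * symSeq 1 p (k - j) = 0 := by
  have h := div_eps p k 0
  have hk' : (k : ℂ) ≠ 0 := by exact_mod_cast hk
  simp only [Finset.range_zero, Finset.sum_empty, mul_zero, Finset.sum_const_zero, Nat.cast_zero,
    zero_add] at h
  have := h.symm
  rw [mul_eq_zero] at this
  rcases this with h | h
  · exact absurd (neg_eq_zero.1 h) hk'
  · exact h

/-- The expansion of the power sum `p_k` in the products `ε_r h_{k-r}`. -/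
lemma p_eq (p : ℕ → ℂ) (k : ℕ) (hk : k ≠ 0) :
    p k = - ∑ r ∈ Finset.range (k + 1), (r : ℂ) * (symSeq (-1) p r * symSeq 1 p (k - r)) := by
  have h1 : ∀ r ∈ Finset.range (k + 1), (r : ℂ) * (symSeq (-1) p r * symSeq 1 p (k - r)) =
      - ∑ l ∈ Finset.range r, symSeq (-1) p l * p (r - l) * symSeq 1 p (k - l - (r - l)) := by
    intro r hr
    rw [← mul_assoc, symSeq_rec, ← Finset.sum_range_reflect, neg_one_mul, neg_mul, Finset.sum_mul]
    congr 1
    refine Finset.sum_congr rfl fun l hl => ?_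
    have := Finset.mem_range.1 hl
    rw [show r - 1 - (r - 1 - l) = l by omega, show r - 1 - l + 1 = r - l by omega,
      show k - l - (r - l) = k - r by omega]
    ring
  rw [Finset.sum_congr rfl h1, Finset.sum_neg_distrib, neg_neg,
    sum_triangle_swap (fun l i => symSeq (-1) p l * p i * symSeq 1 p (k - l - i))]
  have h2 : ∑ l ∈ Finset.range (k + 1), ∑ i ∈ Finset.range (k - l),
      symSeq (-1) p l * p (i + 1) * symSeq 1 p (k - l - (i + 1)) =
      ∑ i ∈ Finset.range k, p (i + 1) *
        ∑ l ∈ Finset.range (k - (i + 1) + 1), symSeq (-1) p l * symSeq 1 p (k - (i + 1) - l) := by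
    simp_rw [Finset.mul_sum]
    rw [Finset.sum_comm' (t' := Finset.range k) (s' := fun i => Finset.range (k - (i + 1) + 1))]
    · refine Finset.sum_congr rfl fun i _ => Finset.sum_congr rfl fun l _ => ?_
      rw [show k - l - (i + 1) = k - (i + 1) - l by omega]; ring
    · intro x y
      simp only [Finset.mem_range]
      omega
  rw [h2]
  obtain ⟨m, rfl⟩ := Nat.exists_eq_succ_of_ne_zero hk
  rw [Finset.sum_range_succ, Finset.sum_eq_zero]
  · simp [symSeq_zero]
  · intro i hi
    have := Finset.mem_range.1 hi
    rw [conv_zero p _ (by omega), mul_zero]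

/-! ### A triangular linear system -/

/-- The linear system satisfied by `Y r a = E[ε_r h_a conj p_{r+a}]` (see `Y_eq`) determines `Y`:
among the pairs with `r + a = k ≥ 1`, only `r = 0` and `r = min n k` can carry a nonzero value.
The induction is on `k` and, for fixed `k`, on `r`; the hypothesis `hzero` supplies the sum over the
entries with index at least `r`, `heq` then determines `Y r (k - r)` for `r < min n k`, and the
remaining entry `r = min n k` is found from `hzero` and `hvan`. -/
lemma solve_Y (n : ℕ) (hn : n ≠ 0) (Y : ℕ → ℕ → ℂ) (h00 : Y 0 0 = n)
    (heq : ∀ r a : ℕ, r + a ≠ 0 → (a : ℂ) * (n + a) * Y r a +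
      ((r : ℂ) + a) * ∑ j ∈ Finset.range (a + 1), Y (r + j) (a - j) =
      ((r : ℂ) + a) * ∑ j ∈ Finset.range (a + 1), Y r (a - j))
    (hzero : ∀ k, k ≠ 0 → ∑ j ∈ Finset.range (k + 1), Y j (k - j) = 0)
    (hvan : ∀ r a, n < r → Y r a = 0) :
    ∀ k, k ≠ 0 → ∀ r, r ≤ k → Y r (k - r) =
      (if r = 0 then 1 else 0) - (if r = min n k then 1 else 0) := by
  intro k
  induction k using Nat.strong_induction_on with
  | _ k IH =>
  intro hk r
  induction r using Nat.strong_induction_on with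
  | _ r IHr =>
  intro hrk
  have hsplit : ∑ j ∈ Finset.range r, Y j (k - j) +
      ∑ j ∈ Finset.range (k - r + 1), Y (r + j) (k - r - j) = 0 := by
    rw [← hzero k hk, show k + 1 = r + (k - r + 1) by omega,
      Finset.sum_range_add (fun j => Y j (k - j)) r (k - r + 1)]
    congr 1
    refine Finset.sum_congr rfl fun j _ => ?_
    rw [show k - r - j = k - (r + j) by omega]
  have hsum : ∀ j ∈ Finset.range r, Y j (k - j) =
      (if j = 0 then 1 else 0) - (if j = min n k then 1 else 0) := by
    intro j hj
    have := Finset.mem_range.1 hj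
    exact IHr j this (by omega)
  rw [Finset.sum_congr rfl hsum, Finset.sum_sub_distrib, Finset.sum_ite_eq', Finset.sum_ite_eq']
    at hsplit
  simp only [Finset.mem_range] at hsplit
  rcases lt_trichotomy r (min n k) with hlt | heq' | hgt
  · -- the linear equation determines `Y r (k - r)`
    have h := heq r (k - r) (by omega)
    rw [show ((r : ℂ) + ((k - r : ℕ) : ℂ)) = k by rw [← Nat.cast_add]; congr 1; omega] at h
    rw [Finset.sum_range_succ' (fun j => Y r (k - r - j)), Nat.sub_zero] at h
    have hY : ∀ j ∈ Finset.range (k - r), Y r (k - r - (j + 1)) =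
        (if j = k - r - 1 then (if r = 0 then (n : ℂ) else -1) else
          if r = 0 then 1 else 0) := by
      intro j hj
      have hj' := Finset.mem_range.1 hj
      by_cases hr0 : r = 0
      · subst hr0
        by_cases hj1 : j = k - 1
        · subst hj1
          rw [show k - 0 - (k - 1 + 1) = 0 by omega, h00]; simp
        · have := IH (k - (j + 1)) (by omega) (by omega) 0 (by omega)
          simp only [Nat.sub_zero] at this ⊢
          rw [this, if_neg (by omega : ¬ 0 = min n (k - (j + 1))), if_neg hj1]; simp
      · have := IH (k - (j + 1)) (by omega) (by omega) r (by omega)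
        rw [show k - r - (j + 1) = k - (j + 1) - r by omega, this]
        by_cases hj1 : j = k - r - 1
        · rw [if_neg hr0, if_pos (by omega), if_pos hj1, if_neg hr0]; simp
        · rw [if_neg hr0, if_neg (by omega), if_neg hj1]; simp
    rw [Finset.sum_congr rfl hY] at h
    have hS : ∑ j ∈ Finset.range (k - r), (if j = k - r - 1 then (if r = 0 then (n : ℂ) else -1) else
          if r = 0 then 1 else 0) = if r = 0 then (n : ℂ) + k - 1 else -1 := by
      obtain ⟨m, hm⟩ : ∃ m, k - r = m + 1 := ⟨k - r - 1, by omega⟩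
      rw [hm, Finset.sum_range_succ, Finset.sum_congr rfl (g := fun j => if r = 0 then (1 : ℂ) else 0)]
      · by_cases hr0 : r = 0
        · subst hr0
          have : k = m + 1 := by omega
          subst this
          simp; ring
        · simp [hr0]
      · intro j hj
        have := Finset.mem_range.1 hj
        rw [if_neg (by omega)]
    rw [hS] at h
    rw [if_neg (by omega : ¬ r = min n k), sub_zero]
    have hkc : (k : ℂ) ≠ 0 := by exact_mod_cast hk
    by_cases hr0 : r = 0
    · subst hr0
      simp only [Nat.sub_zero, if_true, lt_irrefl, if_false, Nat.not_lt_zero] at h hsplit ⊢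
      have h0 : ∑ j ∈ Finset.range (k + 1), Y (0 + j) (k - j) = 0 := by simpa using hsplit
      rw [h0] at h
      have h1 : (k : ℂ) * ((n + k - 1) * Y 0 k) = k * (n + k - 1) := by linear_combination h
      have h2 := mul_left_cancel₀ hkc h1
      have h3 : ((n : ℂ) + k - 1) ≠ 0 := by
        have : ((n : ℂ) + k - 1) = ((n + k - 1 : ℕ) : ℂ) := by
          rw [Nat.cast_sub (by omega)]; push_cast; ring
        rw [this]; exact_mod_cast (by omega : n + k - 1 ≠ 0)
      exact mul_left_cancel₀ h3 (by rw [h2, mul_one])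
    · rw [if_pos (by omega), if_neg (by omega)] at hsplit
      rw [if_neg hr0] at h ⊢
      have h0 : ∑ j ∈ Finset.range (k - r + 1), Y (r + j) (k - r - j) = -1 := by
        linear_combination hsplit
      rw [h0] at h
      have h3 : (((k - r : ℕ) : ℂ) * (n + ((k - r : ℕ) : ℂ)) - k) ≠ 0 := by
        have h4 : k < (k - r) * (n + (k - r)) := by
          obtain ⟨m, hm⟩ : ∃ m, k - r = m + 1 := ⟨k - r - 1, by omega⟩
          have h5 : k = r + (m + 1) := by omega
          have h6 : r + 1 ≤ n := by omega
          rw [hm, h5]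
          nlinarith [Nat.zero_le (m * n), Nat.zero_le (m * m)]
        intro h5
        rw [sub_eq_zero] at h5
        have : (k - r) * (n + (k - r)) = k := by exact_mod_cast h5
        omega
      have : (((k - r : ℕ) : ℂ) * (n + ((k - r : ℕ) : ℂ)) - k) * Y r (k - r) = 0 := by
        linear_combination h
      exact (mul_eq_zero.1 this).resolve_left h3
  · have hlast : ∑ j ∈ Finset.range (k - r + 1), Y (r + j) (k - r - j) = Y r (k - r) := by
      rw [Finset.sum_range_succ', Finset.sum_eq_zero]
      · simp
      · intro j hj
        have := Finset.mem_range.1 hj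
        exact hvan _ _ (by omega)
    rw [hlast, if_pos (by omega), if_neg (by omega)] at hsplit
    rw [if_neg (by omega), if_pos heq']
    linear_combination hsplit
  · rw [hvan _ _ (by omega), if_neg (by omega), if_neg (by omega), sub_zero]

/-- The combination of the `Y r (k - r)` which expresses `E[p_k conj p_k]`; compare `p_eq`. -/
lemma solve_Y_sum (n : ℕ) (hn : n ≠ 0) (Y : ℕ → ℕ → ℂ) (h00 : Y 0 0 = n)
    (heq : ∀ r a : ℕ, r + a ≠ 0 → (a : ℂ) * (n + a) * Y r a +
      ((r : ℂ) + a) * ∑ j ∈ Finset.range (a + 1), Y (r + j) (a - j) =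
      ((r : ℂ) + a) * ∑ j ∈ Finset.range (a + 1), Y r (a - j))
    (hzero : ∀ k, k ≠ 0 → ∑ j ∈ Finset.range (k + 1), Y j (k - j) = 0)
    (hvan : ∀ r a, n < r → Y r a = 0) (k : ℕ) (hk : k ≠ 0) :
    - ∑ r ∈ Finset.range (k + 1), (r : ℂ) * Y r (k - r) = (min n k : ℕ) := by
  have h : ∀ r ∈ Finset.range (k + 1), (r : ℂ) * Y r (k - r) =
      if r = min n k then -(r : ℂ) else 0 := by
    intro r hr
    have := Finset.mem_range.1 hr
    rw [solve_Y n hn Y h00 heq hzero hvan k hk r (by omega)]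
    by_cases h0 : r = 0
    · subst h0; simp
    · by_cases h1 : r = min n k <;> simp [h0, h1]
      aesop
  rw [Finset.sum_congr rfl h, Finset.sum_ite_eq', if_pos (by simp), neg_neg]

/-! ### Integration by parts on the unitary group -/

/-- The unitary group `U(n)`. -/
abbrev UG (n : ℕ) := Matrix.unitaryGroup (Fin n) ℂ

/-- Complex `n × n` matrices. -/
abbrev MC (n : ℕ) := Matrix (Fin n) (Fin n) ℂ

instance (n : ℕ) : BorelSpace (UG n) := ⟨rfl⟩

instance (n : ℕ) : CompactSpace (UG n) := by
  suffices h : IsCompact ((Matrix.unitaryGroup (Fin n) ℂ : Submonoid (MC n)) : Set (MC n)) from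
    isCompact_iff_compactSpace.mp h
  refine IsCompact.of_isClosed_subset (isCompact_univ_pi (fun _ : Fin n =>
    isCompact_univ_pi fun _ : Fin n => isCompact_closedBall (0 : ℂ) 1)) ?_ ?_
  · have : ((Matrix.unitaryGroup (Fin n) ℂ : Submonoid (MC n)) : Set (MC n)) =
        {A : MC n | A * star A = 1} := by
      ext A; exact Matrix.mem_unitaryGroup_iff
    rw [this]
    exact isClosed_eq (by fun_prop) continuous_const
  · intro A hA i _ j _
    simpa using entry_norm_bound_of_unitary hA i j

/-- The one-parameter subgroup `t ↦ exp (tX)` of `U(n)` generated by a skew-Hermitian matrix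
`X`. -/
noncomputable def flow {n : ℕ} (X : MC n) (hX : X.conjTranspose = -X) (t : ℝ) : UG n :=
  ⟨NormedSpace.exp (t • X), by
    rw [Matrix.mem_unitaryGroup_iff, Matrix.star_eq_conjTranspose, ← Matrix.exp_conjTranspose,
      Matrix.conjTranspose_smul, hX, star_trivial, smul_neg,
      ← Matrix.exp_add_of_commute _ _ (Commute.refl (t • X)).neg_right, add_neg_cancel,
      NormedSpace.exp_zero]⟩

lemma flow_add {n : ℕ} (X : MC n) (hX : X.conjTranspose = -X) (s t : ℝ) :
    flow X hX (s + t) = flow X hX s * flow X hX t := by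
  apply Subtype.ext
  simp only [flow, Submonoid.coe_mul, add_smul]
  open scoped Matrix.Norms.Operator in
  exact NormedSpace.exp_add_of_commute (((Commute.refl X).smul_left s).smul_right t)

lemma flow_zero {n : ℕ} (X : MC n) (hX : X.conjTranspose = -X) : flow X hX 0 = 1 := by
  apply Subtype.ext
  simp [flow]

section
open scoped Matrix.Norms.Operator

lemma hasDerivAt_flow_pow {n : ℕ} (X : MC n) (hX : X.conjTranspose = -X) (g : UG n) (c : ℕ) :
    HasDerivAt (fun t : ℝ => (((flow X hX t * g : UG n) : MC n) ^ c))
      (∑ l ∈ Finset.range c, (g : MC n) ^ l * X * (g : MC n) ^ (c - l)) 0 := by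
  have h1 : HasDerivAt (fun t : ℝ => ((flow X hX t * g : UG n) : MC n)) (X * (g : MC n)) 0 := by
    have := (hasDerivAt_exp_smul_const (𝕂 := ℝ) X (0 : ℝ)).mul_const (g : MC n)
    simp only [zero_smul, NormedSpace.exp_zero, one_mul] at this
    exact this
  induction c with
  | zero =>
    simp only [pow_zero, Finset.range_zero, Finset.sum_empty]
    exact hasDerivAt_const (0 : ℝ) (1 : MC n)
  | succ c ih =>
    have := ih.mul h1
    simp only [flow_zero, one_mul] at this
    rw [Finset.sum_range_succ]
    have e : ∑ l ∈ Finset.range c, (g : MC n) ^ l * X * (g : MC n) ^ (c + 1 - l) =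
        (∑ l ∈ Finset.range c, (g : MC n) ^ l * X * (g : MC n) ^ (c - l)) * (g : MC n) := by
      rw [Finset.sum_mul]
      refine Finset.sum_congr rfl fun l hl => ?_
      have := Finset.mem_range.1 hl
      rw [show c + 1 - l = (c - l) + 1 by omega, pow_succ, mul_assoc, mul_assoc, mul_assoc]
    rw [e, show c + 1 - c = 1 by omega, pow_one, mul_assoc _ X]
    exact this

lemma hasDerivAt_flow_pow_entry {n : ℕ} (X : MC n) (hX : X.conjTranspose = -X) (g : UG n) (c : ℕ)
    (i j : Fin n) :
    HasDerivAt (fun t : ℝ => (((flow X hX t * g : UG n) : MC n) ^ c) i j)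
      ((∑ l ∈ Finset.range c, (g : MC n) ^ l * X * (g : MC n) ^ (c - l)) i j) 0 := by
  have h := hasDerivAt_flow_pow X hX g c
  exact (LinearMap.toContinuousLinearMap (Matrix.entryLinearMap ℝ ℂ i j)).hasFDerivAt.comp_hasDerivAt
    (0 : ℝ) h

end

/-- By invariance, the derivative of a function along the flow `t ↦ exp (tX) g` has Haar integral
zero. -/
lemma integral_deriv_eq_zero {n : ℕ} (μ : Measure (UG n)) [IsProbabilityMeasure μ]
    (hinv : ∀ g : UG n, Measure.map (fun x => g * x) μ = μ)
    (X : MC n) (hX : X.conjTranspose = -X) (φ L : UG n → ℂ) (hφ : Continuous φ) (hL : Continuous L)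
    (hd : ∀ g, HasDerivAt (fun t : ℝ => φ (flow X hX t * g)) (L g) 0) :
    ∫ g, L g ∂μ = 0 := by
  have hd' : ∀ g (t : ℝ), HasDerivAt (fun t : ℝ => φ (flow X hX t * g)) (L (flow X hX t * g)) t := by
    intro g t
    have h := hd (flow X hX t * g)
    have h2 : HasDerivAt (fun s : ℝ => φ (flow X hX (s - t) * (flow X hX t * g)))
        (L (flow X hX t * g)) t := by
      have := HasDerivAt.comp_sub_const t t (f := fun s : ℝ => φ (flow X hX s * (flow X hX t * g)))
        (f' := L (flow X hX t * g)) (by simpa using h)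
      exact this
    refine h2.congr_of_eventuallyEq (Eventually.of_forall fun s => ?_)
    simp only
    rw [← mul_assoc, ← flow_add, sub_add_cancel]
  obtain ⟨C, hC⟩ := (isCompact_range hL).isBounded.exists_norm_le
  have hint : ∀ t : ℝ, ∫ g, φ (flow X hX t * g) ∂μ = ∫ g, φ g ∂μ := by
    intro t
    conv_rhs => rw [← hinv (flow X hX t)]
    rw [integral_map (by fun_prop) hφ.aestronglyMeasurable]
  have hci : ∀ f : UG n → ℂ, Continuous f → Integrable f μ := fun f hf =>
    hf.integrable_of_hasCompactSupport (HasCompactSupport.of_compactSpace f)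
  have key := hasDerivAt_integral_of_dominated_loc_of_deriv_le (μ := μ) (x₀ := (0 : ℝ))
    (F := fun t g => φ (flow X hX t * g)) (F' := fun t g => L (flow X hX t * g))
    (bound := fun _ => C) univ_mem
    (Eventually.of_forall fun t => Continuous.aestronglyMeasurable (by fun_prop))
    (hci _ (by fun_prop)) (Continuous.aestronglyMeasurable (by fun_prop))
    (Eventually.of_forall fun g t _ => hC _ ⟨_, rfl⟩)
    (integrable_const C) (Eventually.of_forall fun g t _ => hd' g t)
  have h1 := key.2
  simp only [hint, flow_zero, one_mul] at h1
  exact h1.unique (hasDerivAt_const _ _)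

/-- `N` is a gradient of `Ψ`: for skew-Hermitian `X`, the derivative of `Ψ` along
`t ↦ exp (tX) g` at `t = 0` is `tr (X * N g)`. Both functions are required to be continuous, which on
the compact group gives all integrability needed. -/
structure HasGrad {n : ℕ} (Ψ : UG n → ℂ) (N : UG n → MC n) : Prop where
  cont : Continuous Ψ
  cont_grad : Continuous N
  deriv : ∀ (X : MC n) (hX : X.conjTranspose = -X) (g : UG n),
    HasDerivAt (fun t : ℝ => Ψ (flow X hX t * g)) ((X * N g).trace) 0

/-- The power trace `tr g^c`, that is, the `c`-th power sum of the eigenvalues of `g`. -/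
noncomputable def ptr {n : ℕ} (g : UG n) (c : ℕ) : ℂ := ((g : MC n) ^ c).trace

namespace HasGrad
variable {n : ℕ} {Ψ Φ : UG n → ℂ} {N M : UG n → MC n}

lemma congr_grad (h : HasGrad Ψ N) (e : ∀ g, N g = M g) : HasGrad Ψ M := by
  rwa [← funext e]

lemma const (c : ℂ) : HasGrad (fun _ : UG n => c) (fun _ => 0) :=
  ⟨continuous_const, continuous_const, fun X hX g => by simpa using hasDerivAt_const (0 : ℝ) c⟩

lemma add (h : HasGrad Ψ N) (h' : HasGrad Φ M) :
    HasGrad (fun g => Ψ g + Φ g) (fun g => N g + M g) :=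
  ⟨h.cont.add h'.cont, h.cont_grad.add h'.cont_grad, fun X hX g => by
    simpa only [mul_add, Matrix.trace_add] using (h.deriv X hX g).fun_add (h'.deriv X hX g)⟩

lemma mul (h : HasGrad Ψ N) (h' : HasGrad Φ M) :
    HasGrad (fun g => Ψ g * Φ g) (fun g => Φ g • N g + Ψ g • M g) :=
  ⟨h.cont.mul h'.cont, (h'.cont.smul h.cont_grad).add (h.cont.smul h'.cont_grad), fun X hX g => by
    have := (h.deriv X hX g).fun_mul (h'.deriv X hX g)
    simp only [flow_zero, one_mul] at this
    refine this.congr_deriv ?_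
    rw [mul_add, Matrix.trace_add, Matrix.mul_smul, Matrix.mul_smul, Matrix.trace_smul,
      Matrix.trace_smul, smul_eq_mul, smul_eq_mul, mul_comm]⟩

lemma const_mul (c : ℂ) (h : HasGrad Ψ N) : HasGrad (fun g => c * Ψ g) (fun g => c • N g) :=
  ((const c).mul h).congr_grad fun g => by simp

lemma sum {ι : Type*} (s : Finset ι) (Ψ : ι → UG n → ℂ) (N : ι → UG n → MC n)
    (h : ∀ i ∈ s, HasGrad (Ψ i) (N i)) :
    HasGrad (fun g => ∑ i ∈ s, Ψ i g) (fun g => ∑ i ∈ s, N i g) := by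
  classical
  induction s using Finset.induction_on with
  | empty => simpa using const 0
  | insert a s ha ih =>
    simp only [Finset.sum_insert ha]
    exact (h a (by simp)).add (ih fun i hi => h i (by simp [hi]))

lemma conj (h : HasGrad Ψ N) :
    HasGrad (fun g => (starRingEnd ℂ) (Ψ g)) (fun g => -(N g).conjTranspose) :=
  ⟨h.cont.star, h.cont_grad.matrix_conjTranspose.neg, fun X hX g => by
    have := (h.deriv X hX g).star
    have e : star ((X * N g).trace) = (X * -(N g).conjTranspose).trace := by
      rw [← Matrix.trace_conjTranspose, Matrix.conjTranspose_mul, hX, Matrix.trace_mul_comm]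
      simp
    rw [e] at this
    exact this⟩

lemma cexp (h : HasGrad Ψ N) :
    HasGrad (fun g => Complex.exp (Ψ g)) (fun g => Complex.exp (Ψ g) • N g) :=
  ⟨h.cont.cexp, h.cont.cexp.smul h.cont_grad, fun X hX g => by
    have := (h.deriv X hX g).cexp
    simp only [flow_zero, one_mul] at this
    simpa using this⟩

lemma ptr (c : ℕ) : HasGrad (fun g : UG n => ptr g c) (fun g => (c : ℂ) • (g : MC n) ^ c) := by
  refine ⟨?_, ?_, fun X hX g => ?_⟩
  · unfold _root_.ptr; fun_prop
  · fun_prop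
  · have h : HasDerivAt (fun t : ℝ => ∑ i, (((flow X hX t * g : UG n) : MC n) ^ c) i i)
        (∑ i, (∑ l ∈ Finset.range c, (g : MC n) ^ l * X * (g : MC n) ^ (c - l)) i i) 0 :=
      HasDerivAt.fun_sum fun i _ => hasDerivAt_flow_pow_entry X hX g c i i
    refine h.congr_deriv ?_
    change Matrix.trace (∑ l ∈ Finset.range c, (g : MC n) ^ l * X * (g : MC n) ^ (c - l)) = _
    rw [Matrix.trace_sum, Finset.sum_congr rfl (g := fun _ => (X * (g : MC n) ^ c).trace)]
    · simp
    · intro l hl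
      have := Finset.mem_range.1 hl
      rw [Matrix.mul_assoc, Matrix.trace_mul_comm, Matrix.mul_assoc, ← pow_add]
      congr 3; omega

end HasGrad

/-- Schwinger–Dyson (integration by parts) identity on `U(n)`: the Haar integral of the divergence
of the vector field `g ↦ Ψ g • g^c` vanishes. It is the sum over `i, j` of the invariance identity
for the function `(g^c)_{ij} Ψ` and the direction `X = E_{ij}`; that direction is not skew-Hermitian,
but the identity is complex-linear in `X` and skew-Hermitian matrices span over `ℂ`. -/
lemma schwinger_dyson {n : ℕ} (μ : Measure (UG n)) [IsProbabilityMeasure μ]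
    (hinv : ∀ g : UG n, Measure.map (fun x => g * x) μ = μ)
    {Ψ : UG n → ℂ} {N : UG n → MC n} (h : HasGrad Ψ N) (c : ℕ) :
    ∫ g, (divCoeff (ptr g) c * Ψ g + ((g : MC n) ^ c * N g).trace) ∂μ = 0 := by
  have hcΨ := h.cont
  have hcN := h.cont_grad
  have hci : ∀ f : UG n → ℂ, Continuous f → Integrable f μ := fun f hf =>
    hf.integrable_of_hasCompactSupport (HasCompactSupport.of_compactSpace f)
  -- The derivative of `(g^c)_{ij} Ψ` in the direction `X`, extended linearly to all matrices `X`.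
  let L : MC n → Fin n → Fin n → UG n → ℂ := fun X i j g =>
    (∑ l ∈ Finset.range c, (g : MC n) ^ l * X * (g : MC n) ^ (c - l)) i j * Ψ g +
      ((g : MC n) ^ c) i j * (X * N g).trace
  have hLc : ∀ X i j, Continuous (L X i j) := by
    intro X i j
    have h1 : Continuous fun g : UG n =>
        (∑ l ∈ Finset.range c, (g : MC n) ^ l * X * (g : MC n) ^ (c - l)) i j := by
      apply Continuous.matrix_elem
      fun_prop
    have h2 : Continuous fun g : UG n => ((g : MC n) ^ c) i j := by
      apply Continuous.matrix_elem
      fun_prop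
    have h3 : Continuous fun g : UG n => (X * N g).trace := by fun_prop
    exact (h1.mul hcΨ).add (h2.mul h3)
  have hskew : ∀ X : MC n, X.conjTranspose = -X → ∀ i j, ∫ g, L X i j g ∂μ = 0 := by
    intro X hX i j
    refine integral_deriv_eq_zero μ hinv X hX (fun g => ((g : MC n) ^ c) i j * Ψ g) _ ?_
      (hLc X i j) fun g => ?_
    · refine Continuous.mul ?_ hcΨ
      apply Continuous.matrix_elem
      fun_prop
    · have := (hasDerivAt_flow_pow_entry X hX g c i j).mul (h.deriv X hX g)
      simp only [flow_zero, one_mul] at this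
      exact this
  have hlin : ∀ (X Y : MC n) i j g, L (X + Complex.I • Y) i j g =
      L X i j g + Complex.I * L Y i j g := by
    intro X Y i j g
    simp only [L, mul_add, add_mul, Finset.sum_add_distrib, Matrix.add_apply, Matrix.trace_add,
      Matrix.mul_smul, Matrix.smul_mul, ← Finset.smul_sum, Matrix.smul_apply, Matrix.trace_smul,
      smul_eq_mul]
    ring
  have hall : ∀ X : MC n, ∀ i j, ∫ g, L X i j g ∂μ = 0 := by
    intro X i j
    let A : MC n := (2⁻¹ : ℂ) • (X - X.conjTranspose)
    let B : MC n := (-Complex.I * 2⁻¹) • (X + X.conjTranspose)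
    have hA : A.conjTranspose = -A := by
      simp [A, Matrix.conjTranspose_smul, ← smul_neg]
    have hB : B.conjTranspose = -B := by
      simp only [B, Matrix.conjTranspose_smul, ← neg_smul, Matrix.conjTranspose_add,
        Matrix.conjTranspose_conjTranspose, add_comm]
      simp
    have hX : X = A + Complex.I • B := by
      simp only [A, B, smul_smul]
      rw [show Complex.I * (-Complex.I * 2⁻¹) = 2⁻¹ by
        rw [neg_mul, mul_neg, ← mul_assoc, Complex.I_mul_I]; ring]
      rw [← smul_add, sub_add_add_cancel, ← two_smul ℂ X, smul_smul]
      simp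
    rw [hX]
    simp only [hlin]
    rw [integral_add (hci _ (hLc A i j)) ((hci _ (hLc B i j)).const_mul _),
      integral_const_mul, hskew A hA, hskew B hB]
    simp
  have hsum : ∀ g : UG n, divCoeff (ptr g) c * Ψ g + ((g : MC n) ^ c * N g).trace =
      ∑ i, ∑ j, L (Matrix.single i j 1) i j g := by
    intro g
    simp only [L, Finset.sum_add_distrib]
    congr 1
    · simp only [← Finset.sum_mul]
      congr 1
      simp only [Matrix.sum_apply]
      rw [divCoeff]
      simp_rw [Finset.sum_comm (s := Finset.univ) (t := Finset.range c)]
      refine Finset.sum_congr rfl fun l _ => ?_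
      simp only [_root_.ptr, Matrix.trace, Matrix.diag_apply, Finset.sum_mul_sum]
      refine Finset.sum_congr rfl fun i _ => Finset.sum_congr rfl fun j _ => ?_
      simp [Matrix.mul_apply, Matrix.single_apply, ite_and]
    · simp only [Matrix.trace, Matrix.diag_apply, Matrix.mul_apply]
      refine Finset.sum_congr rfl fun i _ => Finset.sum_congr rfl fun j _ => ?_
      simp [Matrix.single_apply, ite_and]
  simp only [hsum]
  rw [integral_finsetSum _ fun i _ => integrable_finsetSum _ fun j _ => hci _ (hLc _ i j)]
  refine Finset.sum_eq_zero fun i _ => ?_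
  rw [integral_finsetSum _ fun j _ => hci _ (hLc _ i j)]
  exact Finset.sum_eq_zero fun j _ => hall _ i j

/-! ### Eigenvalues and power traces -/

/-- The eigenvalues of `g` with algebraic multiplicity. -/
noncomputable def eig {n : ℕ} (g : UG n) : Multiset ℂ := (g : MC n).charpoly.roots

lemma card_eig {n : ℕ} (g : UG n) : (eig g).card = n := by
  rw [eig, Polynomial.splits_iff_card_roots.1 (IsAlgClosed.splits _), Matrix.charpoly_natDegree_eq_dim,
    Fintype.card_fin]

lemma norm_of_mem_eig {n : ℕ} (g : UG n) {z : ℂ} (hz : z ∈ eig g) : ‖z‖ = 1 := by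
  have h1 : (g : MC n).charpoly.IsRoot z := Polynomial.isRoot_of_mem_roots hz
  have h2 : z ∈ spectrum ℂ (g : MC n) := Matrix.mem_spectrum_iff_isRoot_charpoly.2 h1
  open scoped Matrix.Norms.L2Operator in
  have h3 := spectrum.subset_circle_of_unitary (𝕜 := ℂ) (u := (g : MC n)) g.2 h2
  simpa using h3

lemma exists_fin_map {n : ℕ} {α : Type*} (s : Multiset α) (hs : s.card = n) :
    ∃ z : Fin n → α, s = Finset.univ.val.map z := by
  obtain ⟨l, rfl⟩ : ∃ l : List α, s = (l : Multiset α) := ⟨s.toList, s.coe_toList.symm⟩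
  rw [Multiset.coe_card] at hs
  subst hs
  exact ⟨l.get, by rw [Fin.univ_val_map, List.ofFn_get]⟩

/-- `det q(M) = ∏ q(λ)` over the eigenvalues `λ` of `M`; applied to `q = a - X^k` this gives the
spectrum of `M ^ k` with multiplicities. -/
lemma det_aeval {n : ℕ} (M : MC n) (q : Polynomial ℂ) :
    (Polynomial.aeval M q).det = (M.charpoly.roots.map fun z => q.eval z).prod := by
  have hlin : ∀ a : ℂ, (M - algebraMap ℂ (MC n) a).det =
      (M.charpoly.roots.map fun z => z - a).prod := by
    intro a
    have h := Matrix.eval_charpoly M a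
    have hc : M.charpoly.roots.card = n := by
      rw [Polynomial.splits_iff_card_roots.1 (IsAlgClosed.splits _),
        Matrix.charpoly_natDegree_eq_dim, Fintype.card_fin]
    rw [(IsAlgClosed.splits M.charpoly).eval_eq_prod_roots_of_monic (Matrix.charpoly_monic M)] at h
    rw [← neg_sub, Matrix.det_neg, Fintype.card_fin]
    change _ * (Matrix.scalar (Fin n) a - M).det = _
    have h2 := Multiset.prod_map_neg (M.charpoly.roots.map fun z => a - z)
    rw [Multiset.card_map, hc, Multiset.map_map] at h2
    rw [← h, ← h2]
    simp
  have hq := (IsAlgClosed.splits q).eq_prod_roots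
  let D : Polynomial ℂ →* ℂ :=
    Matrix.detMonoidHom.comp ((Polynomial.aeval M : Polynomial ℂ →ₐ[ℂ] MC n) : Polynomial ℂ →* MC n)
  have hD : ∀ q, D q = (Polynomial.aeval M q).det := fun q => rfl
  have hc : M.charpoly.roots.card = n := by
    rw [Polynomial.splits_iff_card_roots.1 (IsAlgClosed.splits _),
      Matrix.charpoly_natDegree_eq_dim, Fintype.card_fin]
  rw [← hD, hq, map_mul, map_multiset_prod, Multiset.map_map]
  have h1 : ∀ a, D (Polynomial.X - Polynomial.C a) = (M.charpoly.roots.map fun z => z - a).prod := by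
    intro a
    rw [hD, ← hlin]; simp
  have h2 : D (Polynomial.C q.leadingCoeff) = q.leadingCoeff ^ n := by
    rw [hD, Polynomial.aeval_C, Matrix.algebraMap_eq_diagonal]; simp
  simp only [Function.comp_def, h1, h2, Polynomial.eval_mul, Polynomial.eval_C,
    Polynomial.eval_multiset_prod, Multiset.map_map, Polynomial.eval_sub, Polynomial.eval_X,
    Multiset.prod_map_mul, Multiset.map_const', Multiset.prod_replicate, hc]
  rw [Multiset.prod_map_prod_map]

lemma charpoly_pow_roots {n : ℕ} (M : MC n) (k : ℕ) :
    (M ^ k).charpoly.roots = M.charpoly.roots.map (· ^ k) := by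
  have : (M ^ k).charpoly = ((M.charpoly.roots.map (· ^ k)).map fun a => Polynomial.X - Polynomial.C a).prod := by
    refine Polynomial.funext fun a => ?_
    have h := det_aeval M (Polynomial.C a - Polynomial.X ^ k)
    rw [Matrix.eval_charpoly, Polynomial.eval_multiset_prod]
    simp only [map_sub, Polynomial.aeval_C, map_pow, Polynomial.aeval_X] at h
    rw [Multiset.map_map, Multiset.map_map]
    refine Eq.trans h ?_
    simp [Function.comp_def]
  rw [this, Polynomial.roots_multiset_prod_X_sub_C]

lemma ptr_eq_sum_eig {n : ℕ} (g : UG n) (k : ℕ) : ptr g k = ((eig g).map (· ^ k)).sum := by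
  rw [ptr, Matrix.trace_eq_sum_roots_charpoly, charpoly_pow_roots, eig]

lemma ptr_zero {n : ℕ} (g : UG n) : ptr g 0 = n := by simp [ptr]

lemma norm_ptr_le {n : ℕ} (g : UG n) (k : ℕ) : ‖ptr g k‖ ≤ n := by
  obtain ⟨z, hz⟩ := exists_fin_map _ (card_eig g)
  rw [ptr_eq_sum_eig, hz, Multiset.map_map]
  change ‖∑ i, z i ^ k‖ ≤ n
  refine (norm_sum_le _ _).trans ?_
  have : ∀ i, ‖z i‖ = 1 := fun i => norm_of_mem_eig g (by rw [hz]; simp)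
  simp [this]

/-- There are only `n` eigenvalues, so `e_r = 0` for `r > n`; Newton's identities identify `symSeq (-1)`
with `(-1)^r e_r`. -/
lemma symSeq_ptr_eq_zero {n : ℕ} (g : UG n) {r : ℕ} (hr : n < r) : symSeq (-1) (ptr g) r = 0 := by
  obtain ⟨z, hz⟩ := exists_fin_map _ (card_eig g)
  have hp : ∀ k, ptr g k = MvPolynomial.aeval z (MvPolynomial.psum (Fin n) ℂ k) := by
    intro k
    rw [ptr_eq_sum_eig, hz, Multiset.map_map, MvPolynomial.psum]
    simp only [map_sum, map_pow, MvPolynomial.aeval_X]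
    rfl
  have he : ∀ r, symSeq (-1) (ptr g) r =
      (-1) ^ r * MvPolynomial.aeval z (MvPolynomial.esymm (Fin n) ℂ r) := by
    intro r
    induction r using Nat.strong_induction_on with
    | _ r ih =>
      rcases r with _ | r
      · simp [symSeq_zero]
      · have h1 := symSeq_rec (-1) (ptr g) (r + 1)
        have h2 := congrArg (MvPolynomial.aeval z) (MvPolynomial.mul_esymm_eq_sum (Fin n) ℂ (r + 1))
        simp only [map_mul, map_natCast, map_pow, map_neg, map_one, map_sum, ← hp] at h2
        rw [Finset.sum_filter, Finset.Nat.sum_antidiagonal_eq_sum_range_succ_mk,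
          Finset.sum_range_succ] at h2
        simp only [lt_irrefl, if_false, add_zero] at h2
        have h3 : ∑ j ∈ Finset.range (r + 1), ptr g (j + 1) * symSeq (-1) (ptr g) (r + 1 - 1 - j) =
            ∑ x ∈ Finset.range (r + 1), if x < r + 1 then
              (-1) ^ x * (MvPolynomial.aeval z) (MvPolynomial.esymm (Fin n) ℂ x) *
                ptr g (r + 1 - x) else 0 := by
          rw [← Finset.sum_range_reflect]
          refine Finset.sum_congr rfl fun j hj => ?_
          have hj := Finset.mem_range.1 hj
          rw [if_pos hj, ih _ (by omega), mul_comm]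
          rw [show r + 1 - 1 - (r + 1 - 1 - j) = j by omega,
            show r + 1 - 1 - j + 1 = r + 1 - j by omega]
        rw [h3] at h1
        have h4 : ((r + 1 : ℕ) : ℂ) ≠ 0 := Nat.cast_ne_zero.2 r.succ_ne_zero
        apply mul_left_cancel₀ h4
        rw [h1, ← mul_assoc, mul_comm (_ : ℂ) ((-1) ^ (r + 1)), mul_assoc, h2, ← mul_assoc,
          ← pow_add, show r + 1 + (r + 1 + 1) = 2 * (r + 1) + 1 by ring, pow_succ, pow_mul]
        simp
  rw [he, MvPolynomial.esymm, Finset.powersetCard_eq_empty.2 (by simpa using hr)]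
  simp

/-! ### Second moments of the power traces -/

/-- The contribution to the gradient of `symSeq s p` from the recursion, after exchanging the two
summations and summing the inner one by `symSeq_rec`. -/
lemma grad_symSeq_aux (s : ℂ) (p G : ℕ → ℂ) (r : ℕ) :
    ∑ j ∈ Finset.range (r + 1), ∑ i ∈ Finset.range (r - j), p (j + 1) *
        (s * symSeq s p (r - j - 1 - i) * G (i + 1)) =
      ∑ i ∈ Finset.range (r + 1), ((r - i : ℕ) : ℂ) * symSeq s p (r - i) * G (i + 1) := by
  have hsw := sum_triangle_swap (fun j i => p (j + 1) * (s * symSeq s p (r - j - i) * G i)) r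
  have hsw' := sum_triangle_swap (fun i j => p j * (s * symSeq s p (r - i - j) * G (i + 1))) r
  have a1 : ∀ j i : ℕ, r - j - 1 - i = r - j - (i + 1) := fun j i => by omega
  simp only [a1]
  rw [← hsw]
  have a2 : ∀ c ∈ Finset.range (r + 1), ∑ l ∈ Finset.range c, p (l + 1) *
      (s * symSeq s p (r - l - (c - l)) * G (c - l)) =
      ∑ l ∈ Finset.range c, p (c - l) * (s * symSeq s p (r - l - (c - l)) * G (l + 1)) := by
    intro c hc
    have hc := Finset.mem_range.1 hc
    rw [← Finset.sum_range_reflect]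
    refine Finset.sum_congr rfl fun l hl => ?_
    have hl := Finset.mem_range.1 hl
    rw [show c - (c - 1 - l) = l + 1 by omega, show c - 1 - l + 1 = c - l by omega,
      show r - (c - 1 - l) - (l + 1) = r - l - (c - l) by omega]
  rw [Finset.sum_congr rfl a2, hsw']
  refine Finset.sum_congr rfl fun i hi => ?_
  rw [symSeq_rec, Finset.mul_sum, Finset.sum_mul]
  refine Finset.sum_congr rfl fun l hl => ?_
  rw [show r - i - (l + 1) = r - i - 1 - l by omega]
  ring

/-- The gradients of `h_r` and `ε_r`, in the form `∂x_r/∂p_j = (s/j) x_{r-j}`. -/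
lemma hasGrad_symSeq {n : ℕ} (s : ℂ) (r : ℕ) :
    HasGrad (fun g : UG n => symSeq s (ptr g) r)
      (fun g => ∑ j ∈ Finset.range r, (s * symSeq s (ptr g) (r - 1 - j)) • (g : MC n) ^ (j + 1)) := by
  induction r using Nat.strong_induction_on with
  | _ r ih =>
    rcases r with _ | r
    · simpa [symSeq_zero] using HasGrad.const (1 : ℂ)
    · have h := (HasGrad.sum (Finset.range (r + 1)) _ _ fun j hj =>
        (HasGrad.ptr (n := n) (j + 1)).mul (ih (r - j) (by omega))).const_mul (s / ((r : ℂ) + 1))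
      simp only [← symSeq_succ] at h
      refine h.congr_grad fun g => ?_
      have hr : (r : ℂ) + 1 ≠ 0 := by exact_mod_cast Nat.succ_ne_zero r
      ext x y
      simp only [Matrix.smul_apply, Matrix.sum_apply, Matrix.add_apply, smul_eq_mul,
        Finset.sum_add_distrib, Finset.mul_sum, Nat.add_sub_cancel]
      have e2 := grad_symSeq_aux s (ptr g) (fun i => ((g : MC n) ^ i) x y) r
      rw [e2, ← Finset.sum_add_distrib, Finset.mul_sum]
      refine Finset.sum_congr rfl fun i hi => ?_
      have hi' : i ≤ r := by simpa [Nat.lt_succ_iff] using hi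
      push_cast [hi']
      field_simp
      ring

lemma trace_pow_mul_grad_symSeq {n : ℕ} (s : ℂ) (r c : ℕ) (g : UG n) :
    ((g : MC n) ^ c * ∑ j ∈ Finset.range r,
      (s * symSeq s (ptr g) (r - 1 - j)) • (g : MC n) ^ (j + 1)).trace =
    s * ∑ j ∈ Finset.range r, ptr g (c + j + 1) * symSeq s (ptr g) (r - 1 - j) := by
  rw [Finset.mul_sum, Matrix.trace_sum, Finset.mul_sum]
  refine Finset.sum_congr rfl fun j _ => ?_
  rw [Matrix.mul_smul, Matrix.trace_smul, ← pow_add, ← add_assoc, ptr, smul_eq_mul]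
  ring

lemma pow_mul_conjTranspose_pow {n : ℕ} (g : UG n) {c k : ℕ} (h : c ≤ k) :
    ((g : MC n) ^ c * ((g : MC n) ^ k).conjTranspose).trace = (starRingEnd ℂ) (ptr g (k - c)) := by
  have h1 : (g : MC n) ^ c * ((g : MC n) ^ c).conjTranspose = 1 := by
    have := Matrix.mem_unitaryGroup_iff.1 (g ^ c).2
    simpa [Matrix.star_eq_conjTranspose] using this
  rw [← Nat.add_sub_cancel' h, pow_add, Nat.add_sub_cancel_left, Matrix.trace_mul_comm,
    Matrix.conjTranspose_mul, Matrix.mul_assoc]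
  have h2 : ((g : MC n) ^ c).conjTranspose * (g : MC n) ^ c = 1 := by
    have := Matrix.mem_unitaryGroup_iff'.1 (g ^ c).2
    simpa [Matrix.star_eq_conjTranspose] using this
  rw [h2, mul_one, Matrix.trace_conjTranspose]
  rfl

lemma integrable_UG {n : ℕ} (μ : Measure (UG n)) [IsProbabilityMeasure μ] {f : UG n → ℂ}
    (hf : Continuous f) : Integrable f μ :=
  hf.integrable_of_hasCompactSupport (HasCompactSupport.of_compactSpace f)

/-- The moments `E[ε_r h_a conj p_{r+a}]` satisfy the linear equation of `solve_Y`. It is the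
Schwinger–Dyson identity for the field `g ↦ ε_r conj p_{r+a} ∑_{c ≤ a} h_{a-c} g^c`, simplified by
`div_h` and `div_eps`. -/
lemma Y_eq {n : ℕ} (μ : Measure (UG n)) [IsProbabilityMeasure μ]
    (hinv : ∀ g : UG n, Measure.map (fun x => g * x) μ = μ) (r a : ℕ) :
    (a : ℂ) * (n + a) * ∫ g, symSeq (-1) (ptr g) r * symSeq 1 (ptr g) a *
        (starRingEnd ℂ) (ptr g (r + a)) ∂μ +
      ((r : ℂ) + a) * ∑ j ∈ Finset.range (a + 1), ∫ g, symSeq (-1) (ptr g) (r + j) *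
        symSeq 1 (ptr g) (a - j) * (starRingEnd ℂ) (ptr g (r + j + (a - j))) ∂μ =
      ((r : ℂ) + a) * ∑ j ∈ Finset.range (a + 1), ∫ g, symSeq (-1) (ptr g) r *
        symSeq 1 (ptr g) (a - j) * (starRingEnd ℂ) (ptr g (r + (a - j))) ∂μ := by
  have hc : ∀ s r, Continuous fun g : UG n => symSeq s (ptr g) r := fun s r =>
    (hasGrad_symSeq s r).cont
  have hp : ∀ r, Continuous fun g : UG n => (starRingEnd ℂ) (ptr g r) := fun r =>
    (HasGrad.ptr r).conj.cont
  let N : ℕ → UG n → MC n := fun c g => (starRingEnd ℂ) (ptr g (r + a)) •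
      (symSeq 1 (ptr g) (a - c) • ∑ j ∈ Finset.range r,
        ((-1) * symSeq (-1) (ptr g) (r - 1 - j)) • (g : MC n) ^ (j + 1) +
      symSeq (-1) (ptr g) r • ∑ j ∈ Finset.range (a - c),
        (1 * symSeq 1 (ptr g) (a - c - 1 - j)) • (g : MC n) ^ (j + 1)) +
      (symSeq (-1) (ptr g) r * symSeq 1 (ptr g) (a - c)) •
        -(((r + a : ℕ) : ℂ) • (g : MC n) ^ (r + a)).conjTranspose
  have hg : ∀ c, HasGrad (fun g : UG n => symSeq (-1) (ptr g) r * symSeq 1 (ptr g) (a - c) *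
      (starRingEnd ℂ) (ptr g (r + a))) (N c) := fun c =>
    ((hasGrad_symSeq (-1) r).mul (hasGrad_symSeq 1 (a - c))).mul (HasGrad.ptr (r + a)).conj
  have hsd : ∑ c ∈ Finset.range (a + 1), _ = (0 : ℂ) :=
    Finset.sum_eq_zero fun c _ => schwinger_dyson μ hinv (hg c) c
  rw [← integral_finsetSum] at hsd
  swap
  · intro c _
    refine integrable_UG μ (Continuous.add (Continuous.mul ?_ (hg c).cont) ?_)
    · unfold divCoeff
      exact continuous_finsetSum _ fun l _ => (HasGrad.ptr _).cont.mul (HasGrad.ptr _).cont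
    · have := (hg c).cont_grad
      fun_prop
  have key : ∀ g : UG n, ∑ c ∈ Finset.range (a + 1), (divCoeff (ptr g) c *
      (symSeq (-1) (ptr g) r * symSeq 1 (ptr g) (a - c) * (starRingEnd ℂ) (ptr g (r + a))) + ((g : MC n) ^ c * N c g).trace) =
      (a : ℂ) * (n + a) * (symSeq (-1) (ptr g) r * symSeq 1 (ptr g) a *
        (starRingEnd ℂ) (ptr g (r + a))) +
      ((r : ℂ) + a) * ∑ j ∈ Finset.range (a + 1), symSeq (-1) (ptr g) (r + j) *
        symSeq 1 (ptr g) (a - j) * (starRingEnd ℂ) (ptr g (r + j + (a - j))) -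
      ((r : ℂ) + a) * ∑ j ∈ Finset.range (a + 1), symSeq (-1) (ptr g) r *
        symSeq 1 (ptr g) (a - j) * (starRingEnd ℂ) (ptr g (r + (a - j))) := fun g => by
    have h1 := div_h (ptr g) a
    have h2 := div_eps (ptr g) a r
    rw [ptr_zero] at h1
    have hk : ∀ j ∈ Finset.range (a + 1), r + j + (a - j) = r + a := fun j hj => by
      have := Finset.mem_range.1 hj
      omega
    have e1 : (a : ℂ) * (n + a) * (symSeq (-1) (ptr g) r * symSeq 1 (ptr g) a *
        (starRingEnd ℂ) (ptr g (r + a))) = symSeq (-1) (ptr g) r * (starRingEnd ℂ) (ptr g (r + a)) *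
        ((a : ℂ) * (n + a) * symSeq 1 (ptr g) a) := by ring
    have e2 : ((r : ℂ) + a) * ∑ j ∈ Finset.range (a + 1), symSeq (-1) (ptr g) (r + j) *
        symSeq 1 (ptr g) (a - j) * (starRingEnd ℂ) (ptr g (r + j + (a - j))) =
        - (starRingEnd ℂ) (ptr g (r + a)) * (-((r : ℂ) + a) * ∑ j ∈ Finset.range (a + 1),
          symSeq (-1) (ptr g) (r + j) * symSeq 1 (ptr g) (a - j)) := by
      rw [Finset.mul_sum, Finset.mul_sum, Finset.mul_sum]
      refine Finset.sum_congr rfl fun j hj => ?_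
      rw [hk j hj]; ring
    rw [e1, e2, ← h1, ← h2, Finset.mul_sum, Finset.mul_sum, Finset.mul_sum,
      ← Finset.sum_add_distrib, ← Finset.sum_sub_distrib]
    refine Finset.sum_congr rfl fun c hc => ?_
    have hc' := Finset.mem_range.1 hc
    have h3 := trace_pow_mul_grad_symSeq (-1) r c g
    have h4 := trace_pow_mul_grad_symSeq 1 (a - c) c g
    have h5 := pow_mul_conjTranspose_pow g (show c ≤ r + a by omega)
    rw [show r + a - c = r + (a - c) by omega] at h5
    simp only [N, Matrix.mul_add, Matrix.trace_add, Matrix.mul_smul, Matrix.trace_smul, smul_eq_mul,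
      h3, h4, Matrix.mul_neg, Matrix.trace_neg, Matrix.conjTranspose_smul, h5]
    simp
    ring
  have hi : ∀ r a k, Integrable (fun g : UG n => symSeq (-1) (ptr g) r * symSeq 1 (ptr g) a *
      (starRingEnd ℂ) (ptr g k)) μ := fun r a k =>
    integrable_UG μ (((hc _ _).mul (hc _ _)).mul (hp _))
  simp only [key] at hsd
  rw [integral_sub, integral_add, integral_const_mul, integral_const_mul, integral_const_mul,
    integral_finsetSum _ fun _ _ => hi _ _ _, integral_finsetSum _ fun _ _ => hi _ _ _, sub_eq_zero] at hsd
  · exact hsd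
  · exact (hi _ _ _).const_mul _
  · exact (integrable_finsetSum _ fun _ _ => hi _ _ _).const_mul _
  · exact ((hi _ _ _).const_mul _).add ((integrable_finsetSum _ fun _ _ => hi _ _ _).const_mul _)
  · exact (integrable_finsetSum _ fun _ _ => hi _ _ _).const_mul _

/-- The second moment of the power traces, `E |tr g^k|² = min n k`. -/
lemma integral_ptr_sq {n : ℕ} (hn : n ≠ 0) (μ : Measure (UG n)) [IsProbabilityMeasure μ]
    (hinv : ∀ g : UG n, Measure.map (fun x => g * x) μ = μ) (k : ℕ) (hk : k ≠ 0) :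
    ∫ g, ptr g k * (starRingEnd ℂ) (ptr g k) ∂μ = (min n k : ℕ) := by
  have hi : ∀ r a k, Integrable (fun g : UG n => symSeq (-1) (ptr g) r * symSeq 1 (ptr g) a *
      (starRingEnd ℂ) (ptr g k)) μ := fun r a k =>
    integrable_UG μ (((hasGrad_symSeq _ _).cont.mul (hasGrad_symSeq _ _).cont).mul
      (HasGrad.ptr _).conj.cont)
  rw [← solve_Y_sum n hn (fun r a => ∫ g, symSeq (-1) (ptr g) r * symSeq 1 (ptr g) a *
    (starRingEnd ℂ) (ptr g (r + a)) ∂μ) (by simp [symSeq_zero, ptr_zero])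
    (fun r a _ => Y_eq μ hinv r a) ?_ ?_ k hk]
  · rw [← Finset.sum_neg_distrib]
    simp only [← integral_const_mul, ← integral_neg]
    rw [← integral_finsetSum (Finset.range (k + 1)) (μ := μ) (f := fun (x : ℕ) g =>
      -((x : ℂ) * (symSeq (-1) (ptr g) x * symSeq 1 (ptr g) (k - x) *
        (starRingEnd ℂ) (ptr g (x + (k - x)))))) fun _ _ => ((hi _ _ _).const_mul _).neg]
    refine integral_congr_ae (Eventually.of_forall fun g => ?_)
    change ptr g k * (starRingEnd ℂ) (ptr g k) = _
    generalize hq : (starRingEnd ℂ) (ptr g k) = q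
    rw [p_eq (ptr g) k hk, neg_mul, Finset.sum_mul, ← Finset.sum_neg_distrib]
    refine Finset.sum_congr rfl fun r hr => ?_
    have := Finset.mem_range.1 hr
    rw [show r + (k - r) = k by omega, hq]
    ring
  · intro k hk
    rw [← integral_finsetSum _ fun _ _ => hi _ _ _, ← integral_zero (UG n) ℂ (μ := μ)]
    refine integral_congr_ae (Eventually.of_forall fun g => ?_)
    simp only
    have h := conv_zero (ptr g) k hk
    have h2 : ∀ j ∈ Finset.range (k + 1), symSeq (-1) (ptr g) j * symSeq 1 (ptr g) (k - j) *
        (starRingEnd ℂ) (ptr g (j + (k - j))) = symSeq (-1) (ptr g) j * symSeq 1 (ptr g) (k - j) *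
        (starRingEnd ℂ) (ptr g k) := fun j hj => by
      have := Finset.mem_range.1 hj
      rw [show j + (k - j) = k by omega]
    rw [Finset.sum_congr rfl h2, ← Finset.sum_mul, h, zero_mul]
  · intro r a hr
    simp [symSeq_ptr_eq_zero _ hr]

/-- The trace `tr g^k` for an integer exponent `k`. -/
noncomputable def pz {n : ℕ} (g : UG n) (k : ℤ) : ℂ := ((g ^ k : UG n) : MC n).trace

lemma pz_natCast {n : ℕ} (g : UG n) (k : ℕ) : pz g k = ptr g k := by
  simp [pz, ptr]

lemma pz_zero {n : ℕ} (g : UG n) : pz g 0 = n := by simp [pz]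

lemma pz_neg {n : ℕ} (g : UG n) (k : ℤ) : pz g (-k) = (starRingEnd ℂ) (pz g k) := by
  rw [pz, zpow_neg, pz, ← Unitary.star_eq_inv, Unitary.coe_star, Matrix.star_eq_conjTranspose,
    Matrix.trace_conjTranspose]
  rfl

lemma hasGrad_pz {n : ℕ} (k : ℤ) :
    HasGrad (fun g : UG n => pz g k) (fun g => (k : ℂ) • ((g ^ k : UG n) : MC n)) := by
  obtain ⟨m, rfl | rfl⟩ := k.eq_nat_or_neg
  · simp only [pz_natCast]
    exact (HasGrad.ptr m).congr_grad fun g => by simp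
  · simp only [pz_neg, pz_natCast]
    refine (HasGrad.ptr m).conj.congr_grad fun g => ?_
    rw [zpow_neg, ← Unitary.star_eq_inv, Unitary.coe_star, Matrix.star_eq_conjTranspose]
    simp

lemma continuous_pz {n : ℕ} (k : ℤ) : Continuous fun g : UG n => pz g k := (hasGrad_pz k).cont

/-- The scalar matrix `exp (iα)`. -/
noncomputable def phase (n : ℕ) (α : ℝ) : UG n :=
  ⟨Complex.exp (α * Complex.I) • 1, by
    rw [Matrix.mem_unitaryGroup_iff, star_smul, star_one, smul_mul_smul_comm, mul_one,
      Complex.star_def, Complex.mul_conj, Complex.normSq_eq_norm_sq, Complex.norm_exp_ofReal_mul_I]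
    simp⟩

lemma pz_phase_mul {n : ℕ} (α : ℝ) (g : UG n) (k : ℤ) :
    pz (phase n α * g) k = Complex.exp (k * α * Complex.I) * pz g k := by
  have hc : ∀ m : ℕ, pz (phase n α * g) m = Complex.exp (m * α * Complex.I) * pz g m := by
    intro m
    rw [pz_natCast, pz_natCast, ptr, ptr]
    simp only [phase, Submonoid.coe_mul, Matrix.smul_mul, one_mul, smul_pow, Matrix.trace_smul,
      smul_eq_mul]
    rw [← Complex.exp_nat_mul, mul_assoc]
  obtain ⟨m, rfl | rfl⟩ := k.eq_nat_or_neg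
  · exact_mod_cast hc m
  · rw [pz_neg, pz_neg, hc, map_mul, ← Complex.exp_conj]
    simp

/-- A function that is homogeneous of nonzero degree under multiplication by scalars has Haar
integral zero. -/
lemma integral_eq_zero_of_phase {n : ℕ} (μ : Measure (UG n)) [IsProbabilityMeasure μ]
    (hinv : ∀ g : UG n, Measure.map (fun x => g * x) μ = μ) (F : UG n → ℂ) (hF : Continuous F)
    (m : ℤ) (hm : m ≠ 0)
    (h : ∀ (α : ℝ) g, F (phase n α * g) = Complex.exp (m * α * Complex.I) * F g) :
    ∫ g, F g ∂μ = 0 := by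
  have h1 : ∫ g, F g ∂μ = ∫ g, F (phase n (Real.pi / m) * g) ∂μ := by
    conv_lhs => rw [← hinv (phase n (Real.pi / m))]
    rw [integral_map (by fun_prop) hF.aestronglyMeasurable]
  -- Multiplication by the scalar `exp (iπ/m)` changes the sign of `F`.
  simp only [h, integral_const_mul] at h1
  have hm' : (m : ℂ) ≠ 0 := by exact_mod_cast hm
  have h2 : Complex.exp (m * ((Real.pi / m : ℝ) : ℂ) * Complex.I) = -1 := by
    push_cast
    rw [mul_div_cancel₀ _ hm', Complex.exp_pi_mul_I]
  rw [h2] at h1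
  have : (2 : ℂ) * ∫ g, F g ∂μ = 0 := by linear_combination h1
  simpa using this

lemma integral_pz_mul_conj {n : ℕ} (μ : Measure (UG n)) [IsProbabilityMeasure μ]
    (hinv : ∀ g : UG n, Measure.map (fun x => g * x) μ = μ) (j k : ℤ) (hjk : j ≠ k) :
    ∫ g, pz g j * (starRingEnd ℂ) (pz g k) ∂μ = 0 := by
  refine integral_eq_zero_of_phase μ hinv _
    ((continuous_pz j).mul (continuous_pz k).star) (j - k) (sub_ne_zero.2 hjk) fun α g => ?_
  rw [pz_phase_mul, pz_phase_mul, map_mul, ← Complex.exp_conj]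
  push_cast
  rw [sub_mul, sub_mul, sub_eq_add_neg, Complex.exp_add]
  simp
  ring

lemma integral_pz {n : ℕ} (μ : Measure (UG n)) [IsProbabilityMeasure μ]
    (hinv : ∀ g : UG n, Measure.map (fun x => g * x) μ = μ) (k : ℤ) (hk : k ≠ 0) :
    ∫ g, pz g k ∂μ = 0 :=
  integral_eq_zero_of_phase μ hinv _ (continuous_pz k) k hk fun α g => pz_phase_mul α g k

lemma integral_norm_pz_sq_le {n : ℕ} (hn : n ≠ 0) (μ : Measure (UG n)) [IsProbabilityMeasure μ]
    (hinv : ∀ g : UG n, Measure.map (fun x => g * x) μ = μ) (k : ℤ) (hk : k ≠ 0) :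
    ∫ g, ‖pz g k‖ ^ 2 ∂μ ≤ |(k : ℝ)| := by
  have hc : ∀ m : ℕ, m ≠ 0 → ∫ g, ‖pz g m‖ ^ 2 ∂μ ≤ m := by
    intro m hm
    have h := integral_ptr_sq hn μ hinv m hm
    simp only [Complex.mul_conj, Complex.normSq_eq_norm_sq] at h
    rw [integral_complex_ofReal] at h
    simp only [pz_natCast]
    have h' : ∫ g, ‖ptr g m‖ ^ 2 ∂μ = ((min n m : ℕ) : ℝ) :=
      Complex.ofReal_injective (h.trans (Complex.ofReal_natCast _).symm)
    rw [h']
    exact_mod_cast min_le_right _ _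
  obtain ⟨m, rfl | rfl⟩ := k.eq_nat_or_neg
  · simpa using hc m (by simpa using hk)
  · simpa [pz_neg] using hc m (by simpa using hk)

/-! ### The Stein equation for trigonometric polynomials -/

/-- The linear statistic `∑_{k ∈ S} a_k tr g^k` of the trigonometric polynomial
`∑_{k ∈ S} a_k e^{ikθ}`. -/
noncomputable def trigStat {n : ℕ} (S : Finset ℤ) (a : ℤ → ℂ) (g : UG n) : ℂ :=
  ∑ k ∈ S, a k * pz g k

section
variable {n : ℕ} {S : Finset ℤ} {a : ℤ → ℂ}

lemma hasGrad_trigStat : HasGrad (fun g : UG n => trigStat S a g)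
    (fun g => ∑ k ∈ S, a k • (k : ℂ) • ((g ^ k : UG n) : MC n)) :=
  HasGrad.sum S _ _ fun k _ => (hasGrad_pz k).const_mul (a k)

lemma continuous_trigStat : Continuous fun g : UG n => trigStat S a g := hasGrad_trigStat.cont

lemma conj_trigStat (hS : ∀ k ∈ S, -k ∈ S) (ha : ∀ k, a (-k) = (starRingEnd ℂ) (a k)) (g : UG n) :
    (starRingEnd ℂ) (trigStat S a g) = trigStat S a g := by
  unfold trigStat
  rw [map_sum]
  refine Finset.sum_nbij' (fun k => -k) (fun k => -k) hS hS (by simp) (by simp) fun k _ => ?_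
  rw [map_mul, pz_neg, ha]

/-- Variance bound, uniform in `n`, from the orthogonality of the `tr g^k` and
`E |tr g^k|² ≤ |k|`. -/
lemma integral_norm_trigStat_sq_le (hn : n ≠ 0) (μ : Measure (UG n)) [IsProbabilityMeasure μ]
    (hinv : ∀ g : UG n, Measure.map (fun x => g * x) μ = μ) (h0 : (0 : ℤ) ∉ S) :
    ∫ g, ‖trigStat S a g‖ ^ 2 ∂μ ≤ ∑ k ∈ S, |(k : ℝ)| * ‖a k‖ ^ 2 := by
  have hint : ∀ j k, Integrable (fun g : UG n => pz g j * (starRingEnd ℂ) (pz g k)) μ := fun j k =>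
    integrable_UG μ ((continuous_pz j).mul (continuous_pz k).star)
  have h1 : ((∫ g, ‖trigStat S a g‖ ^ 2 ∂μ : ℝ) : ℂ) =
      ((∑ k ∈ S, ‖a k‖ ^ 2 * ∫ g : UG n, ‖pz g k‖ ^ 2 ∂μ : ℝ) : ℂ) := by
    rw [← integral_complex_ofReal]
    have e : ∀ g : UG n, ((‖trigStat S a g‖ ^ 2 : ℝ) : ℂ) = ∑ j ∈ S, ∑ k ∈ S,
        (a j * (starRingEnd ℂ) (a k)) * (pz g j * (starRingEnd ℂ) (pz g k)) := by
      intro g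
      rw [← Complex.normSq_eq_norm_sq, ← Complex.mul_conj, trigStat, map_sum, Finset.sum_mul_sum]
      refine Finset.sum_congr rfl fun j _ => Finset.sum_congr rfl fun k _ => ?_
      rw [map_mul]; ring
    simp only [e]
    rw [integral_finsetSum _ fun j _ => integrable_finsetSum _ fun k _ => (hint j k).const_mul _]
    push_cast
    refine Finset.sum_congr rfl fun j hj => ?_
    rw [integral_finsetSum _ fun k _ => (hint j k).const_mul _, Finset.sum_eq_single_of_mem j hj]
    · rw [integral_const_mul, Complex.mul_conj, Complex.normSq_eq_norm_sq]
      simp only [Complex.mul_conj, Complex.normSq_eq_norm_sq]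
      rw [integral_complex_ofReal]
      push_cast; rfl
    · intro k _ hk
      rw [integral_const_mul, integral_pz_mul_conj μ hinv j k (Ne.symm hk), mul_zero]
  rw [Complex.ofReal_injective h1]
  refine Finset.sum_le_sum fun k hk => ?_
  rw [mul_comm]
  exact mul_le_mul_of_nonneg_right
    (integral_norm_pz_sq_le hn μ hinv k fun h => h0 (h ▸ hk)) (by positivity)

lemma norm_integral_pz_mul_le (hn : n ≠ 0) (μ : Measure (UG n)) [IsProbabilityMeasure μ]
    (hinv : ∀ g : UG n, Measure.map (fun x => g * x) μ = μ) {Φ : UG n → ℂ}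
    (hΦ : ∀ g, ‖Φ g‖ ≤ 1) (k : ℤ) (hk : k ≠ 0) :
    ‖∫ g, pz g k * Φ g ∂μ‖ ≤ 1 + |(k : ℝ)| := by
  have hi : Integrable (fun g : UG n => ‖pz g k‖ ^ 2) μ :=
    ((continuous_pz k).norm.pow 2).integrable_of_hasCompactSupport
      (HasCompactSupport.of_compactSpace _)
  calc ‖∫ g, pz g k * Φ g ∂μ‖ ≤ ∫ g, (1 + ‖pz g k‖ ^ 2) ∂μ := by
        refine norm_integral_le_of_norm_le ((integrable_const 1).add hi)
          (Eventually.of_forall fun g => ?_)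
        rw [norm_mul]
        have := hΦ g
        nlinarith [norm_nonneg (pz g k), norm_nonneg (Φ g), sq_nonneg (‖pz g k‖ - 1)]
    _ ≤ _ := by
        rw [integral_add (integrable_const 1) hi]
        simpa using integral_norm_pz_sq_le hn μ hinv k hk

lemma norm_integral_pz_mul_pz_mul_le (hn : n ≠ 0) (μ : Measure (UG n)) [IsProbabilityMeasure μ]
    (hinv : ∀ g : UG n, Measure.map (fun x => g * x) μ = μ) {Φ : UG n → ℂ}
    (hΦ : ∀ g, ‖Φ g‖ ≤ 1) (j k : ℤ) (hj : j ≠ 0) (hk : k ≠ 0) :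
    ‖∫ g, pz g j * pz g k * Φ g ∂μ‖ ≤ |(j : ℝ)| + |(k : ℝ)| := by
  have hi : ∀ k, Integrable (fun g : UG n => ‖pz g k‖ ^ 2) μ := fun k =>
    ((continuous_pz k).norm.pow 2).integrable_of_hasCompactSupport
      (HasCompactSupport.of_compactSpace _)
  calc ‖∫ g, pz g j * pz g k * Φ g ∂μ‖ ≤ ∫ g, (‖pz g j‖ ^ 2 + ‖pz g k‖ ^ 2) ∂μ := by
        refine norm_integral_le_of_norm_le ((hi j).add (hi k)) (Eventually.of_forall fun g => ?_)
        rw [norm_mul, norm_mul]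
        have h1 := hΦ g
        have h2 : ‖pz g j‖ * ‖pz g k‖ ≤ ‖pz g j‖ ^ 2 + ‖pz g k‖ ^ 2 := by
          nlinarith [sq_nonneg (‖pz g j‖ - ‖pz g k‖), sq_nonneg (‖pz g j‖), sq_nonneg (‖pz g k‖)]
        exact (mul_le_of_le_one_right (by positivity) h1).trans h2
    _ ≤ _ := by
        rw [integral_add (hi j) (hi k)]
        exact add_le_add (integral_norm_pz_sq_le hn μ hinv j hj)
          (integral_norm_pz_sq_le hn μ hinv k hk)

lemma norm_cexp_trigStat (hS : ∀ k ∈ S, -k ∈ S) (ha : ∀ k, a (-k) = (starRingEnd ℂ) (a k))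
    (t : ℝ) (g : UG n) : ‖Complex.exp (Complex.I * t * trigStat S a g)‖ = 1 := by
  obtain ⟨r, hr⟩ := Complex.conj_eq_iff_real.1 (conj_trigStat hS ha g)
  rw [hr, mul_assoc, mul_comm, ← Complex.ofReal_mul, Complex.norm_exp_ofReal_mul_I]

/-- Approximate Stein equation for positive frequencies. The Schwinger–Dyson identity for
`Ψ = exp (itT)` and exponent `c = m + 1` has two terms of order `n`, namely `n E[p_c Ψ]` and
`-n · itc a_{-c} E[Ψ]`; the others are bounded uniformly in `n` by the second moments of the
`tr g^k`. -/
lemma stein_nat (hn : n ≠ 0) (μ : Measure (UG n)) [IsProbabilityMeasure μ]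
    (hinv : ∀ g : UG n, Measure.map (fun x => g * x) μ = μ)
    (hS : ∀ k ∈ S, -k ∈ S) (ha : ∀ k, a (-k) = (starRingEnd ℂ) (a k)) (t : ℝ) (m : ℕ)
    (hm : (-(m + 1 : ℕ) : ℤ) ∈ S) :
    ‖∫ g, pz g (m + 1 : ℕ) * Complex.exp (Complex.I * t * trigStat S a g) ∂μ -
      Complex.I * t * (m + 1 : ℕ) * a (-(m + 1 : ℕ)) *
        ∫ g, Complex.exp (Complex.I * t * trigStat S a g) ∂μ‖ ≤
      ((m * (m + 1) : ℝ) + |t| * ∑ k ∈ S, |(k : ℝ)| * ‖a k‖ * (1 + |((m + 1 : ℕ) + k : ℝ)|)) / n := by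
  set c : ℕ := m + 1 with hc
  set Φ : UG n → ℂ := fun g => Complex.exp (Complex.I * t * trigStat S a g) with hΦ
  have hΦ1 : ∀ g, ‖Φ g‖ ≤ 1 := fun g => (norm_cexp_trigStat hS ha t g).le
  have hg : HasGrad Φ _ := (hasGrad_trigStat.const_mul (Complex.I * t)).cexp
  have hΦc : Continuous Φ := hg.cont
  have hpi : ∀ k, Integrable (fun g => pz g k * Φ g) μ := fun k =>
    integrable_UG μ ((continuous_pz k).mul hΦc)
  have hppi : ∀ j k, Integrable (fun g => pz g j * pz g k * Φ g) μ := fun j k =>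
    integrable_UG μ (((continuous_pz j).mul (continuous_pz k)).mul hΦc)
  have hsd := schwinger_dyson μ hinv hg c
  -- `l = 0` in the divergence coefficient gives the leading term since `p_0 = n`.
  have e : ∀ g : UG n, divCoeff (ptr g) c * Φ g + ((g : MC n) ^ c *
      Complex.exp (Complex.I * t * trigStat S a g) • (Complex.I * t) •
        ∑ k ∈ S, a k • (k : ℂ) • ((g ^ k : UG n) : MC n)).trace =
      (n * (pz g c * Φ g) + ∑ l ∈ Finset.range m, pz g (l + 1 : ℕ) * pz g (c - (l + 1) : ℕ) * Φ g) +
      ∑ k ∈ S, Complex.I * t * (k * a k) * (pz g (c + k) * Φ g) := by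
    intro g
    congr 1
    · rw [divCoeff, hc, Finset.sum_range_succ', ptr_zero]
      simp only [pz_natCast]
      rw [add_mul, Finset.sum_mul, add_comm]
      congr 1
      rw [Nat.sub_zero]; ring
    · rw [Matrix.mul_smul, Matrix.mul_smul, Finset.mul_sum, Matrix.trace_smul, Matrix.trace_smul,
        Matrix.trace_sum, smul_eq_mul, smul_eq_mul, Finset.mul_sum, Finset.mul_sum]
      refine Finset.sum_congr rfl fun k _ => ?_
      rw [Matrix.mul_smul, Matrix.mul_smul, Matrix.trace_smul, Matrix.trace_smul, smul_eq_mul,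
        smul_eq_mul]
      have : ((g : MC n) ^ c * ((g ^ k : UG n) : MC n)).trace = pz g (c + k) := by
        rw [pz, zpow_add]; simp
      rw [this]
      simp only [hΦ]
      ring
  simp only [e] at hsd
  rw [integral_add, integral_add, integral_const_mul, integral_finsetSum _ fun _ _ => hppi _ _,
    integral_finsetSum _ fun _ _ => (hpi _).const_mul _, ← Finset.add_sum_erase S _ hm] at hsd
  rotate_left
  · exact (hpi _).const_mul _
  · exact integrable_finsetSum _ fun _ _ => hppi _ _
  · exact ((hpi _).const_mul _).add (integrable_finsetSum _ fun _ _ => hppi _ _)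
  · exact integrable_finsetSum _ fun _ _ => (hpi _).const_mul _
  simp only [integral_const_mul] at hsd
  -- The frequency `k = -c` contributes `p_{c+k} = p_0 = n`.
  rw [add_neg_cancel] at hsd
  simp only [pz_zero, integral_const_mul] at hsd
  have hn' : (0 : ℝ) < n := by positivity
  rw [le_div_iff₀ hn']
  have hb1 : ‖∑ l ∈ Finset.range m, ∫ g, pz g (l + 1 : ℕ) * pz g (c - (l + 1) : ℕ) * Φ g ∂μ‖ ≤
      m * (m + 1) := by
    refine (norm_sum_le _ _).trans ?_
    have : ∀ l ∈ Finset.range m, ‖∫ g, pz g (l + 1 : ℕ) * pz g (c - (l + 1) : ℕ) * Φ g ∂μ‖ ≤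
        (m : ℝ) + 1 := by
      intro l hl
      have hl := Finset.mem_range.1 hl
      refine (norm_integral_pz_mul_pz_mul_le hn μ hinv hΦ1 _ _ (by omega) (by omega)).trans ?_
      rw [Int.cast_natCast, Int.cast_natCast, Nat.abs_cast, Nat.abs_cast, ← Nat.cast_add,
        show l + 1 + (c - (l + 1)) = m + 1 by omega]
      simp
    refine (Finset.sum_le_sum this).trans ?_
    rw [Finset.sum_const, Finset.card_range, nsmul_eq_mul]
  have hb2 : ‖∑ k ∈ S.erase (-(c : ℤ)), Complex.I * t * (k * a k) * ∫ g, pz g (c + k) * Φ g ∂μ‖ ≤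
      |t| * ∑ k ∈ S, |(k : ℝ)| * ‖a k‖ * (1 + |((c : ℝ) + k)|) := by
    refine (norm_sum_le _ _).trans ?_
    rw [Finset.mul_sum]
    refine (Finset.sum_le_sum (g := fun k : ℤ => |t| * (|(k : ℝ)| * ‖a k‖ * (1 + |((c : ℝ) + k)|)))
      fun k hk => ?_).trans
      (Finset.sum_le_sum_of_subset_of_nonneg (Finset.erase_subset _ _) fun _ _ _ => by positivity)
    have hk' := Finset.ne_of_mem_erase hk
    have := norm_integral_pz_mul_le hn μ hinv hΦ1 (c + k) (by omega)
    push_cast at this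
    rw [norm_mul, norm_mul, norm_mul, norm_mul, Complex.norm_I, one_mul, Complex.norm_real,
      Complex.norm_intCast, Real.norm_eq_abs, mul_assoc]
    gcongr
  calc _ = ‖(n : ℂ) * (∫ g, pz g c * Φ g ∂μ - Complex.I * t * c * a (-c) * ∫ g, Φ g ∂μ)‖ := by
        rw [norm_mul, Complex.norm_natCast, mul_comm]
    _ = ‖-(∑ l ∈ Finset.range m, ∫ g, pz g (l + 1 : ℕ) * pz g (c - (l + 1) : ℕ) * Φ g ∂μ +
        ∑ k ∈ S.erase (-(c : ℤ)), Complex.I * t * (k * a k) * ∫ g, pz g (c + k) * Φ g ∂μ)‖ := by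
        congr 1
        simp only [Int.cast_neg, Int.cast_natCast] at hsd
        linear_combination hsd
    _ ≤ _ := by
        rw [norm_neg]
        exact (norm_add_le _ _).trans (add_le_add hb1 hb2)

end

section
variable {n : ℕ} {S : Finset ℤ} {a : ℤ → ℂ}

/-- The constant in the `O(1/n)` error term of the approximate Stein equation `stein_int`. -/
noncomputable def steinConst (S : Finset ℤ) (a : ℤ → ℂ) (k : ℤ) : ℝ :=
  (k : ℝ) ^ 2 + ∑ j ∈ S, |(j : ℝ)| * ‖a j‖ * (1 + |(k : ℝ)| + |(j : ℝ)|)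

lemma steinConst_nonneg (k : ℤ) : 0 ≤ steinConst S a k := by unfold steinConst; positivity

/-- The approximate Stein equation for every frequency in `S`; negative frequencies follow from
positive ones by complex conjugation, which replaces `t` by `-t`. -/
lemma stein_int (hn : n ≠ 0) (μ : Measure (UG n)) [IsProbabilityMeasure μ]
    (hinv : ∀ g : UG n, Measure.map (fun x => g * x) μ = μ)
    (h0 : (0 : ℤ) ∉ S) (hS : ∀ k ∈ S, -k ∈ S) (ha : ∀ k, a (-k) = (starRingEnd ℂ) (a k)) (t : ℝ)
    (k : ℤ) (hk : k ∈ S) :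
    ‖∫ g, pz g k * Complex.exp (Complex.I * t * trigStat S a g) ∂μ -
      Complex.I * t * (|k| : ℤ) * a (-k) *
        ∫ g, Complex.exp (Complex.I * t * trigStat S a g) ∂μ‖ ≤
      steinConst S a k * (1 + |t|) / n := by
  have hpos : ∀ (t : ℝ) (m : ℕ), (-(m + 1 : ℕ) : ℤ) ∈ S →
      ‖∫ g, pz g (m + 1 : ℕ) * Complex.exp (Complex.I * t * trigStat S a g) ∂μ -
      Complex.I * t * (m + 1 : ℕ) * a (-(m + 1 : ℕ)) *
        ∫ g, Complex.exp (Complex.I * t * trigStat S a g) ∂μ‖ ≤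
      steinConst S a (m + 1 : ℕ) * (1 + |t|) / n := by
    intro t m hm
    refine (stein_nat hn μ hinv hS ha t m hm).trans ?_
    gcongr
    rw [steinConst, Int.cast_natCast]
    have h1 : (m : ℝ) * (m + 1) ≤ ((m + 1 : ℕ) : ℝ) ^ 2 := by push_cast; nlinarith
    have h2 : ∑ k ∈ S, |(k : ℝ)| * ‖a k‖ * (1 + |(((m + 1 : ℕ) : ℝ) + k)|) ≤
        ∑ j ∈ S, |(j : ℝ)| * ‖a j‖ * (1 + |((m + 1 : ℕ) : ℝ)| + |(j : ℝ)|) := by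
      refine Finset.sum_le_sum fun j _ => ?_
      have := abs_add_le ((m + 1 : ℕ) : ℝ) (j : ℝ)
      exact mul_le_mul_of_nonneg_left (by linarith) (by positivity)
    have h3 : 0 ≤ ∑ k ∈ S, |(k : ℝ)| * ‖a k‖ * (1 + |(((m + 1 : ℕ) : ℝ) + k)|) := by positivity
    nlinarith [abs_nonneg t, mul_le_mul_of_nonneg_left h2 (abs_nonneg t),
      mul_nonneg (abs_nonneg t) (sq_nonneg ((m + 1 : ℕ) : ℝ))]
  have hk0 : k ≠ 0 := fun h => h0 (h ▸ hk)
  obtain ⟨c, rfl | rfl⟩ := k.eq_nat_or_neg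
  · obtain ⟨m, rfl⟩ : ∃ m, c = m + 1 := ⟨c - 1, by omega⟩
    simpa only [Nat.abs_cast, Int.cast_natCast] using hpos t m (hS _ hk)
  · obtain ⟨m, rfl⟩ : ∃ m, c = m + 1 := ⟨c - 1, by omega⟩
    have h := hpos (-t) m hk
    have hst : ∀ (t : ℝ) (g : UG n), (starRingEnd ℂ) (Complex.exp (Complex.I * (-t : ℝ) * trigStat S a g)) =
        Complex.exp (Complex.I * t * trigStat S a g) := by
      intro t g
      rw [← Complex.exp_conj, map_mul, map_mul, conj_trigStat hS ha]
      simp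
    rw [← Complex.norm_conj, map_sub, map_mul, ← integral_conj, ← integral_conj] at h
    simp only [map_mul, ← pz_neg, hst, ← ha] at h
    have hsc : steinConst S a (-((m + 1 : ℕ) : ℤ)) = steinConst S a ((m + 1 : ℕ) : ℤ) := by
      simp only [steinConst, Int.cast_neg, neg_sq, abs_neg]
    rw [hsc, abs_neg, neg_neg, Nat.abs_cast, Int.cast_natCast]
    simpa [ha] using h

end

/-- The characteristic function of the statistic of a real trigonometric polynomial is within
`O(1/n)` of a Gaussian one: summing the Stein equations against `i a_k` gives
`φ' = -tVφ + O(1/n)`, which is integrated with the factor `exp (t²V/2)`. -/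
lemma charFun_trigStat (S : Finset ℤ) (a : ℤ → ℂ)
    (h0 : (0 : ℤ) ∉ S) (hS : ∀ k ∈ S, -k ∈ S) (ha : ∀ k, a (-k) = (starRingEnd ℂ) (a k))
    {n : ℕ} (hn : n ≠ 0) (μ : Measure (UG n)) [IsProbabilityMeasure μ]
    (hinv : ∀ g : UG n, Measure.map (fun x => g * x) μ = μ) (t : ℝ) :
    ‖∫ g, Complex.exp (Complex.I * t * trigStat S a g) ∂μ -
      Real.exp (-(t ^ 2 * (∑ k ∈ S, |(k : ℝ)| * ‖a k‖ ^ 2) / 2))‖ ≤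
      |t| * (((∑ k ∈ S, ‖a k‖ * steinConst S a k) * (1 + |t|)) / n) := by
  set V : ℝ := ∑ k ∈ S, |(k : ℝ)| * ‖a k‖ ^ 2 with hV
  set φ : ℝ → ℂ := fun t => ∫ g, Complex.exp (Complex.I * t * trigStat S a g) ∂μ with hφ
  set C : ℝ := ∑ k ∈ S, ‖a k‖ * steinConst S a k with hC
  have hc : ∀ t : ℝ, Continuous fun g : UG n => Complex.exp (Complex.I * t * trigStat S a g) :=
    fun t => (hasGrad_trigStat.const_mul (Complex.I * t)).cexp.cont
  have hcF : Continuous fun g : UG n => trigStat S a g := continuous_trigStat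
  obtain ⟨B, hB⟩ := (isCompact_range hcF).isBounded.exists_norm_le
  have hder : ∀ t : ℝ, HasDerivAt φ (∫ g, Complex.I * trigStat S a g *
      Complex.exp (Complex.I * t * trigStat S a g) ∂μ) t := by
    intro t
    refine (hasDerivAt_integral_of_dominated_loc_of_deriv_le (μ := μ) (x₀ := t)
      (F := fun (t : ℝ) g => Complex.exp (Complex.I * t * trigStat S a g))
      (F' := fun (t : ℝ) g => Complex.I * trigStat S a g *
        Complex.exp (Complex.I * t * trigStat S a g))
      (bound := fun _ => B) univ_mem
      (Eventually.of_forall fun t => (hc t).aestronglyMeasurable) (integrable_UG μ (hc t))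
      (((continuous_const.mul hcF).mul (hc t)).aestronglyMeasurable)
      (Eventually.of_forall fun g s _ => ?_) (integrable_const B)
      (Eventually.of_forall fun g s _ => ?_)).2
    · rw [norm_mul, norm_mul, Complex.norm_I, one_mul, norm_cexp_trigStat hS ha, mul_one]
      exact hB _ ⟨g, rfl⟩
    · have h1 : HasDerivAt (fun s : ℝ => Complex.I * (s : ℂ) * trigStat S a g)
          (Complex.I * 1 * trigStat S a g) s :=
        ((Complex.ofRealCLM.hasDerivAt (x := s)).const_mul Complex.I).mul_const _
      refine h1.cexp.congr_deriv ?_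
      ring
  -- The left side is `φ'(t) + tVφ(t)`.
  have hst : ∀ t : ℝ, ‖(∫ g, Complex.I * trigStat S a g *
      Complex.exp (Complex.I * t * trigStat S a g) ∂μ) + t * V * φ t‖ ≤ C * (1 + |t|) / n := by
    intro t
    have e : (∫ g, Complex.I * trigStat S a g *
      Complex.exp (Complex.I * t * trigStat S a g) ∂μ) + t * V * φ t =
      ∑ k ∈ S, Complex.I * a k * (∫ g, pz g k * Complex.exp (Complex.I * t * trigStat S a g) ∂μ -
      Complex.I * t * (|k| : ℤ) * a (-k) * φ t) := by
      have e1 : ∀ g : UG n, Complex.I * trigStat S a g *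
          Complex.exp (Complex.I * t * trigStat S a g) = ∑ k ∈ S, Complex.I * a k *
            (pz g k * Complex.exp (Complex.I * t * trigStat S a g)) := by
        intro g
        conv_lhs => enter [1, 2]; rw [trigStat]
        rw [Finset.mul_sum, Finset.sum_mul]
        exact Finset.sum_congr rfl fun k _ => by ring
      simp only [e1]
      have hi : ∀ k, Integrable (fun g : UG n => Complex.I * a k *
          (pz g k * Complex.exp (Complex.I * t * trigStat S a g))) μ := fun k =>
        (integrable_UG μ ((continuous_pz k).mul (hc t))).const_mul _
      rw [integral_finsetSum _ fun k _ => hi k]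
      simp only [integral_const_mul, mul_sub, Finset.sum_sub_distrib]
      rw [sub_eq_add_neg]
      congr 1
      rw [hV, Complex.ofReal_sum, Finset.mul_sum, Finset.sum_mul, ← Finset.sum_neg_distrib]
      refine Finset.sum_congr rfl fun k _ => ?_
      rw [ha, Complex.ofReal_mul, Complex.ofReal_pow, ← Complex.conj_mul']
      rw [← Int.cast_abs, Complex.ofReal_intCast]
      linear_combination ((t : ℂ) * (|k| : ℤ) * a k * (starRingEnd ℂ) (a k) * φ t) *
        Complex.I_mul_I
    rw [e]
    refine (norm_sum_le _ _).trans ?_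
    rw [hC, Finset.sum_mul, Finset.sum_div]
    refine Finset.sum_le_sum fun k hk => ?_
    rw [norm_mul, norm_mul, Complex.norm_I, one_mul]
    refine (mul_le_mul_of_nonneg_left (stein_int hn μ hinv h0 hS ha t k hk)
      (norm_nonneg (a k))).trans_eq ?_
    ring
  have hV0 : 0 ≤ V := by positivity
  -- The integrating factor turns the differential equation into a bound on the derivative of `ψ`.
  let ψ : ℝ → ℂ := fun s => φ s * Complex.exp (((s ^ 2 * V / 2 : ℝ)) : ℂ)
  have hψ : ∀ s : ℝ, HasDerivAt ψ (((∫ g, Complex.I * trigStat S a g *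
      Complex.exp (Complex.I * s * trigStat S a g) ∂μ) + s * V * φ s) *
      Complex.exp (((s ^ 2 * V / 2 : ℝ)) : ℂ)) s := by
    intro s
    have h1 : HasDerivAt (fun s : ℝ => s ^ 2 * V / 2) (s * V) s := by
      have := (((hasDerivAt_id s).pow 2).mul_const V).div_const 2
      simp only [id] at this
      refine this.congr_deriv ?_
      simp
      ring
    refine ((hder s).mul h1.ofReal_comp.cexp).congr_deriv ?_
    push_cast
    ring
  have hC0 : 0 ≤ C := by
    rw [hC]; exact Finset.sum_nonneg fun k _ => mul_nonneg (norm_nonneg _) (steinConst_nonneg k)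
  have hmain : ‖ψ t - ψ 0‖ ≤ (C * (1 + |t|) / n * Real.exp (t ^ 2 * V / 2)) * ‖t - 0‖ := by
    refine (convex_Icc (-|t|) |t|).norm_image_sub_le_of_norm_hasDerivWithin_le
      (f' := fun s => _) (fun s _ => (hψ s).hasDerivWithinAt) (fun s hs => ?_)
      (by simp) ⟨neg_abs_le t, le_abs_self t⟩
    have hs' : |s| ≤ |t| := abs_le.2 hs
    rw [norm_mul, ← Complex.ofReal_exp, Complex.norm_real, Real.norm_eq_abs, Real.abs_exp]
    have := hst s
    have h2 : s ^ 2 ≤ t ^ 2 := sq_le_sq.2 hs'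
    gcongr
    exact this.trans (by gcongr)
  have hψ0 : ψ 0 = 1 := by simp [ψ, φ]
  rw [hψ0, sub_zero, Real.norm_eq_abs] at hmain
  have hfin : φ t - Real.exp (-(t ^ 2 * (∑ k ∈ S, |(k : ℝ)| * ‖a k‖ ^ 2) / 2)) =
      (ψ t - 1) * Real.exp (-(t ^ 2 * V / 2)) := by
    simp only [ψ]
    rw [sub_mul, mul_assoc, ← Complex.ofReal_exp, ← Complex.ofReal_mul, ← Real.exp_add, add_neg_cancel,
      Real.exp_zero, Complex.ofReal_one, mul_one, one_mul]
  rw [hfin, norm_mul, Complex.norm_real, Real.norm_eq_abs, Real.abs_exp]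
  calc _ ≤ (C * (1 + |t|) / n * Real.exp (t ^ 2 * V / 2)) * |t| * Real.exp (-(t ^ 2 * V / 2)) := by
        gcongr
    _ = |t| * (C * (1 + |t|) / n) * (Real.exp (t ^ 2 * V / 2) * Real.exp (-(t ^ 2 * V / 2))) := by
        ring
    _ = _ := by rw [← Real.exp_add, add_neg_cancel, Real.exp_zero, mul_one]

/-! ### Sums over eigenvalue angles -/

section

open scoped ENNReal NNReal BoundedContinuousFunction

instance factTwoPi : Fact (0 < 2 * Real.pi) := ⟨Real.two_pi_pos⟩

/-- The circle, as the additive group `ℝ / 2πℤ` of angles. -/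
abbrev TT := AddCircle (2 * Real.pi)

section
variable {n : ℕ}

/-- The eigenvalues of `g`, listed with multiplicity in an arbitrary order. -/
noncomputable def eigVal (g : UG n) : Fin n → ℂ :=
  Classical.choose (exists_fin_map _ (card_eig g))

lemma eig_spec (g : UG n) : eig g = Finset.univ.val.map (eigVal g) :=
  Classical.choose_spec (exists_fin_map _ (card_eig g))

lemma norm_eigVal (g : UG n) (i : Fin n) : ‖eigVal g i‖ = 1 :=
  norm_of_mem_eig g (by rw [eig_spec]; simp)

/-- The eigenvalue angles of `g`, listed with multiplicity in the order of `eigVal g`. -/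
noncomputable def eigAngle (g : UG n) (i : Fin n) : TT := ((eigVal g i).arg : ℝ)

lemma linearStatistic_eq {V : ℝ → ℝ} (hper : Function.Periodic V (2 * Real.pi)) (g : UG n) :
    linearStatistic V g = ∑ i, hper.lift (eigAngle g i) := by
  change ((eig g).map fun z => V z.arg).sum = _
  rw [eig_spec, Multiset.map_map]
  rfl

lemma fourier_arg {z : ℂ} (hz : ‖z‖ = 1) (k : ℤ) : fourier k ((z.arg : ℝ) : TT) = z ^ k := by
  have hpi : (Real.pi : ℂ) ≠ 0 := Complex.ofReal_ne_zero.2 Real.pi_ne_zero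
  have e : 2 * Real.pi * Complex.I * k * (z.arg : ℝ) / ((2 * Real.pi : ℝ) : ℂ) =
      k * ((z.arg : ℂ) * Complex.I) := by
    push_cast
    field_simp
  rw [fourier_coe_apply, e, Complex.exp_int_mul]
  congr 1
  conv_rhs => rw [← Complex.norm_mul_exp_arg_mul_I z, hz]
  rw [Complex.ofReal_one, one_mul]

lemma pz_eq_sum (g : UG n) (k : ℤ) : pz g k = ∑ i, fourier k (eigAngle g i) := by
  have hnat : ∀ m : ℕ, pz g m = ∑ i, fourier (m : ℤ) (eigAngle g i) := by
    intro m
    rw [pz_natCast, ptr_eq_sum_eig]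
    rw [eig_spec, Multiset.map_map]
    refine Finset.sum_congr rfl fun i _ => ?_
    rw [eigAngle, fourier_arg (norm_eigVal g i), zpow_natCast]
    rfl
  obtain ⟨m, rfl | rfl⟩ := k.eq_nat_or_neg
  · exact hnat m
  · rw [pz_neg, hnat, map_sum]
    exact Finset.sum_congr rfl fun i _ => fourier_neg.symm

lemma exists_trig_approx (φ : C(TT, ℂ)) {ε : ℝ} (hε : 0 < ε) :
    ∃ q ∈ Submodule.span ℂ (Set.range (@fourier (2 * Real.pi))), ∀ x, ‖φ x - q x‖ < ε := by
  have h : φ ∈ (Submodule.span ℂ (Set.range (@fourier (2 * Real.pi)))).topologicalClosure := by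
    rw [span_fourier_closure_eq_top]; trivial
  obtain ⟨q, hq, hd⟩ := Metric.mem_closure_iff.1 h ε hε
  refine ⟨q, hq, fun x => ?_⟩
  rw [dist_eq_norm] at hd
  exact ((φ - q).norm_coe_le_norm x).trans_lt hd

lemma continuous_trig {q : C(TT, ℂ)}
    (hq : q ∈ Submodule.span ℂ (Set.range (@fourier (2 * Real.pi)))) :
    Continuous fun g : UG n => ∑ i, q (eigAngle g i) := by
  induction hq using Submodule.span_induction with
  | mem x h =>
    obtain ⟨k, rfl⟩ := h
    simpa only [← pz_eq_sum] using continuous_pz k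
  | zero => simp [continuous_const]
  | add x y _ _ hx hy =>
    simp only [ContinuousMap.add_apply, Finset.sum_add_distrib]
    exact hx.add hy
  | smul a x _ hx =>
    simp only [ContinuousMap.smul_apply, ← Finset.smul_sum]
    exact hx.const_smul a

lemma integral_trig (μ : Measure (UG n)) [IsProbabilityMeasure μ]
    (hinv : ∀ g : UG n, Measure.map (fun x => g * x) μ = μ) {q : C(TT, ℂ)}
    (hq : q ∈ Submodule.span ℂ (Set.range (@fourier (2 * Real.pi)))) :
    ∫ g : UG n, ∑ i, q (eigAngle g i) ∂μ = n * ∫ x, q x ∂AddCircle.haarAddCircle := by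
  induction hq using Submodule.span_induction with
  | mem x h =>
    obtain ⟨k, rfl⟩ := h
    simp only [← pz_eq_sum]
    have h1 := congrFun (fourierCoeff_fourier (T := 2 * Real.pi) k) 0
    simp only [fourierCoeff, neg_zero, fourier_zero, one_smul] at h1
    rw [h1]
    by_cases hk : k = 0
    · subst hk; simp [pz_zero]
    · rw [integral_pz μ hinv k hk, Pi.single_eq_of_ne (Ne.symm hk), mul_zero]
  | zero => simp
  | add x y hxs hys hx hy =>
    simp only [ContinuousMap.add_apply, Finset.sum_add_distrib]
    rw [integral_add (integrable_UG μ (continuous_trig hxs)) (integrable_UG μ (continuous_trig hys)),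
      hx, hy, integral_add, mul_add]
    · exact x.continuous.integrable_of_hasCompactSupport (HasCompactSupport.of_compactSpace _)
    · exact y.continuous.integrable_of_hasCompactSupport (HasCompactSupport.of_compactSpace _)
  | smul a x _ hx =>
    simp only [ContinuousMap.smul_apply, ← Finset.smul_sum]
    rw [integral_smul, hx, integral_smul]
    simp only [smul_eq_mul]; ring

lemma norm_sum_eigAngle_sub_le {φ q : TT → ℂ} {ε : ℝ} (h : ∀ x, ‖φ x - q x‖ < ε) (g : UG n) :
    ‖∑ i, φ (eigAngle g i) - ∑ i, q (eigAngle g i)‖ ≤ n * ε := by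
  rw [← Finset.sum_sub_distrib]
  refine (norm_sum_le _ _).trans ((Finset.sum_le_sum fun i _ => (h _).le).trans ?_)
  simp

/-- The individual angles cannot be chosen continuously, but symmetric sums over them are
continuous, being uniform limits of combinations of the `tr g^k`. -/
lemma continuous_sum_eigAngle (φ : C(TT, ℂ)) :
    Continuous fun g : UG n => ∑ i, φ (eigAngle g i) := by
  refine continuous_of_uniform_approx_of_continuous fun u hu => ?_
  obtain ⟨ε, hε, hu⟩ := Metric.mem_uniformity_dist.1 hu
  have hn : (0 : ℝ) < n + 1 := by positivity
  obtain ⟨q, hq, hqφ⟩ := exists_trig_approx φ (div_pos hε hn)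
  refine ⟨_, continuous_trig hq, fun g => hu ?_⟩
  rw [dist_eq_norm]
  refine (norm_sum_eigAngle_sub_le hqφ g).trans_lt ?_
  rw [mul_div_assoc', div_lt_iff₀ hn]
  nlinarith

/-- The mean eigenvalue measure is `n` times Haar measure, tested on continuous functions. -/
lemma integral_sum_eigAngle (μ : Measure (UG n)) [IsProbabilityMeasure μ]
    (hinv : ∀ g : UG n, Measure.map (fun x => g * x) μ = μ) (φ : C(TT, ℂ)) :
    ∫ g : UG n, ∑ i, φ (eigAngle g i) ∂μ = n * ∫ x, φ x ∂AddCircle.haarAddCircle := by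
  rw [← sub_eq_zero, ← norm_le_zero_iff]
  refine le_of_forall_pos_le_add fun ε hε => ?_
  have hn : (0 : ℝ) < 2 * n + 1 := by positivity
  obtain ⟨q, hq, hqφ⟩ := exists_trig_approx φ (div_pos hε hn)
  have hqc := continuous_trig (n := n) hq
  have hqi := integral_trig μ hinv hq
  have hi : ∀ φ : C(TT, ℂ), Integrable φ (AddCircle.haarAddCircle (T := 2 * Real.pi)) := fun φ =>
    φ.continuous.integrable_of_hasCompactSupport (HasCompactSupport.of_compactSpace _)
  have h1 : ‖∫ g : UG n, ∑ i, φ (eigAngle g i) ∂μ - ∫ g : UG n, ∑ i, q (eigAngle g i) ∂μ‖ ≤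
      n * (ε / (2 * n + 1)) := by
    rw [← integral_sub (integrable_UG μ (continuous_sum_eigAngle φ)) (integrable_UG μ hqc)]
    refine (norm_integral_le_of_norm_le_const (Eventually.of_forall fun g =>
      norm_sum_eigAngle_sub_le hqφ g)).trans_eq ?_
    simp
  have h2 : ‖∫ x, q x ∂AddCircle.haarAddCircle - ∫ x, φ x ∂AddCircle.haarAddCircle‖ ≤
      ε / (2 * n + 1) := by
    rw [← integral_sub (hi q) (hi φ)]
    refine (norm_integral_le_of_norm_le_const (C := ε / (2 * n + 1))
      (Eventually.of_forall fun x => ?_)).trans_eq ?_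
    · rw [norm_sub_rev]; exact (hqφ x).le
    · simp
  calc _ = ‖(∫ g : UG n, ∑ i, φ (eigAngle g i) ∂μ - ∫ g : UG n, ∑ i, q (eigAngle g i) ∂μ) +
        n * (∫ x, q x ∂AddCircle.haarAddCircle - ∫ x, φ x ∂AddCircle.haarAddCircle)‖ := by
        rw [hqi]; congr 1; ring
    _ ≤ n * (ε / (2 * n + 1)) + n * (ε / (2 * n + 1)) := by
        refine (norm_add_le _ _).trans (add_le_add h1 ?_)
        rw [norm_mul, Complex.norm_natCast]
        gcongr
    _ = (2 * n) / (2 * n + 1) * ε := by ring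
    _ ≤ 0 + ε := by
        rw [zero_add]
        exact mul_le_of_le_one_left hε.le ((div_le_one hn).2 (by linarith))

end

section
variable {n : ℕ}

/-- The eigenvalue counting measure of `g` on the circle. -/
noncomputable def eigMeas (g : UG n) : Measure TT := ∑ i, Measure.dirac (eigAngle g i)

instance (g : UG n) : IsFiniteMeasure (eigMeas g) := by
  unfold eigMeas; infer_instance

lemma lintegral_eigMeas (g : UG n) (f : TT → ℝ≥0∞) :
    ∫⁻ x, f x ∂eigMeas g = ∑ i, f (eigAngle g i) := by
  rw [eigMeas, lintegral_finsetSum_measure]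
  simp only [lintegral_dirac]

/-- A nonnegative bounded continuous function on the circle, regarded as a complex-valued continuous
function. -/
noncomputable def nnToC (φ : TT →ᵇ ℝ≥0) : C(TT, ℂ) :=
  ⟨fun x => ((φ x : ℝ) : ℂ), by fun_prop⟩

lemma continuous_lintegral_eigMeas (φ : TT →ᵇ ℝ≥0) :
    Continuous fun g : UG n => ∫⁻ x, φ x ∂eigMeas g := by
  have h := (Complex.continuous_re.comp (continuous_sum_eigAngle (n := n) (nnToC φ)))
  have e : (fun g : UG n => ∫⁻ x, φ x ∂eigMeas g) =
      fun g => ENNReal.ofReal (∑ i, nnToC φ (eigAngle g i)).re := by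
    funext g
    rw [lintegral_eigMeas, Complex.re_sum, ENNReal.ofReal_sum_of_nonneg]
    · simp [nnToC]
    · intro i _; simp [nnToC]
  rw [e]
  exact ENNReal.continuous_ofReal.comp h

/-- `eigMeas` is measurable because closed sets are approximated from outside by continuous
functions, whose integrals depend continuously on `g`. -/
lemma measurable_eigMeas : Measurable (eigMeas (n := n)) := by
  refine Measurable.measure_of_isPiSystem (S := {s | IsClosed s})
    (by rw [BorelSpace.measurable_eq (α := TT), borel_eq_generateFrom_isClosed])
    isPiSystem_isClosed (fun C hC => ?_) ?_
  · exact measurable_of_tendsto_metrizable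
      (fun k => (continuous_lintegral_eigMeas (hC.apprSeq k)).measurable)
      (tendsto_pi_nhds.2 fun g => HasOuterApproxClosed.tendsto_lintegral_apprSeq hC (eigMeas g))
  · simp [eigMeas]

/-- The mean eigenvalue counting measure is `n` times Haar measure. Consequently sums over the
eigenvalue angles make sense for functions on the circle that are only defined almost everywhere. -/
lemma bind_eigMeas (μ : Measure (UG n)) [IsProbabilityMeasure μ]
    (hinv : ∀ g : UG n, Measure.map (fun x => g * x) μ = μ) :
    μ.bind eigMeas = (n : ℝ≥0∞) • AddCircle.haarAddCircle := by
  have : IsFiniteMeasure ((n : ℝ≥0∞) • (AddCircle.haarAddCircle : Measure TT)) :=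
    Measure.smul_finite _ (by simp)
  symm
  refine ext_of_forall_lintegral_eq_of_IsFiniteMeasure fun φ => ?_
  rw [Measure.lintegral_bind measurable_eigMeas.aemeasurable (by fun_prop), lintegral_smul_measure]
  have hc : Continuous fun g : UG n => ∑ i, (φ (eigAngle g i) : ℝ) := by
    refine (Complex.continuous_re.comp (continuous_sum_eigAngle (nnToC φ))).congr fun g => ?_
    simp [nnToC]
  have h : ∫ g : UG n, ∑ i, (φ (eigAngle g i) : ℝ) ∂μ =
      n * ∫ x, (φ x : ℝ) ∂AddCircle.haarAddCircle := by
    have h := integral_sum_eigAngle μ hinv (nnToC φ)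
    simp only [nnToC, ContinuousMap.coe_mk, ← Complex.ofReal_sum] at h
    rw [integral_complex_ofReal, integral_complex_ofReal] at h
    exact_mod_cast h
  have h' := congrArg ENNReal.ofReal h
  rw [ofReal_integral_eq_lintegral_ofReal, ENNReal.ofReal_mul (by positivity),
    ofReal_integral_eq_lintegral_ofReal] at h'
  · simp only [lintegral_eigMeas]
    simpa [ENNReal.ofReal_sum_of_nonneg] using h'.symm
  · exact (show Continuous fun x => (φ x : ℝ) by fun_prop).integrable_of_hasCompactSupport
      (HasCompactSupport.of_compactSpace _)
  · exact Eventually.of_forall fun x => NNReal.coe_nonneg _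
  · exact hc.integrable_of_hasCompactSupport (HasCompactSupport.of_compactSpace _)
  · exact Eventually.of_forall fun x => Finset.sum_nonneg fun i _ => NNReal.coe_nonneg _

lemma lintegral_sum_eigAngle (μ : Measure (UG n)) [IsProbabilityMeasure μ]
    (hinv : ∀ g : UG n, Measure.map (fun x => g * x) μ = μ) {f : TT → ℝ≥0∞}
    (hf : AEMeasurable f AddCircle.haarAddCircle) :
    ∫⁻ g : UG n, ∑ i, f (eigAngle g i) ∂μ = n * ∫⁻ x, f x ∂AddCircle.haarAddCircle := by
  have hf' : AEMeasurable f (μ.bind eigMeas) := by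
    rw [bind_eigMeas μ hinv]; exact hf.smul_measure _
  have := Measure.lintegral_bind measurable_eigMeas.aemeasurable hf'
  rw [bind_eigMeas μ hinv, lintegral_smul_measure] at this
  simp only [lintegral_eigMeas] at this
  rw [← this, smul_eq_mul]

lemma measurable_sum_eigAngle {f : TT → ℝ} (hf : Measurable f) :
    Measurable fun g : UG n => ∑ i, f (eigAngle g i) := by
  have h : ∀ f : TT → ℝ≥0, Measurable f → Measurable fun g : UG n => ∑ i, (f (eigAngle g i) : ℝ) := by
    intro f hf
    have h1 : Measurable fun g : UG n => ∫⁻ x, f x ∂eigMeas g :=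
      (Measure.measurable_lintegral (by fun_prop)).comp measurable_eigMeas
    simp only [lintegral_eigMeas] at h1
    have h2 := h1.ennreal_toReal
    simp only [← ENNReal.ofNNReal_finsetSum, ENNReal.coe_toReal, NNReal.coe_sum] at h2
    exact h2
  have e : (fun g : UG n => ∑ i, f (eigAngle g i)) = fun g =>
      ∑ i, ((f (eigAngle g i)).toNNReal : ℝ) - ∑ i, ((-f (eigAngle g i)).toNNReal : ℝ) := by
    funext g
    rw [← Finset.sum_sub_distrib]
    refine Finset.sum_congr rfl fun i _ => ?_
    rw [Real.coe_toNNReal', Real.coe_toNNReal', max_zero_sub_max_neg_zero_eq_self]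
  rw [e]
  exact (h _ hf.real_toNNReal).sub (h _ hf.neg.real_toNNReal)

lemma ae_forall_eigAngle (μ : Measure (UG n)) [IsProbabilityMeasure μ]
    (hinv : ∀ g : UG n, Measure.map (fun x => g * x) μ = μ) {p : TT → Prop}
    (hp : ∀ᵐ x ∂AddCircle.haarAddCircle, p x) : ∀ᵐ g ∂μ, ∀ i, p (eigAngle g i) := by
  have h : ∀ᵐ x ∂(μ.bind eigMeas), p x := by
    rw [bind_eigMeas μ hinv]
    exact Measure.ae_smul_measure hp _
  filter_upwards [Measure.ae_ae_of_ae_bind measurable_eigMeas.aemeasurable h] with g hg i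
  have h2 := ae_finsetSum_measure_iff.1 hg i (Finset.mem_univ i)
  rw [ae_dirac_eq] at h2
  exact h2

end

/-! ### Fourier series of the symbol -/

/-- The complex-valued function on the circle induced by the periodic function `V`. -/
noncomputable def circleFun {V : ℝ → ℝ} (hper : Function.Periodic V (2 * Real.pi)) (x : TT) : ℂ :=
  (hper.lift x : ℝ)

lemma integrable_circleFun {V : ℝ → ℝ} (hper : Function.Periodic V (2 * Real.pi))
    (hint : IntervalIntegrable V volume (-Real.pi) Real.pi) :
    Integrable (circleFun hper) AddCircle.haarAddCircle := by
  have e : circleFun hper = AddCircle.liftIoc (2 * Real.pi) (-Real.pi) (fun θ => (V θ : ℂ)) := by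
    funext x
    obtain ⟨y, rfl⟩ := (AddCircle.equivIoc (2 * Real.pi) (-Real.pi)).symm.surjective x
    change _ = AddCircle.liftIoc (2 * Real.pi) (-Real.pi) (fun θ => (V θ : ℂ)) ((y : ℝ) : TT)
    rw [AddCircle.liftIoc_coe_apply y.2]
    rfl
  rw [e, ← memLp_one_iff_integrable, memLp_haarAddCircle_iff]
  refine MemLp.memLp_liftIoc ?_
  rw [memLp_one_iff_integrable, show -Real.pi + 2 * Real.pi = Real.pi by ring]
  exact ((intervalIntegrable_iff_integrableOn_Ioc_of_le (by linarith [Real.pi_pos])).1 hint).ofReal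

lemma fourierCoeff_circleFun {V : ℝ → ℝ} (hper : Function.Periodic V (2 * Real.pi)) (k : ℤ) :
    fourierCoeff (circleFun hper) k = fourierCoeff' (fun θ => (V θ : ℂ)) k := by
  rw [fourierCoeff_eq_intervalIntegral _ _ (-Real.pi), fourierCoeff',
    show -Real.pi + 2 * Real.pi = Real.pi by ring, one_div, ← Complex.ofReal_inv,
    Complex.real_smul]
  congr 1
  refine intervalIntegral.integral_congr fun θ _ => ?_
  have hpi : (Real.pi : ℂ) ≠ 0 := Complex.ofReal_ne_zero.2 Real.pi_ne_zero
  simp only [fourier_coe_apply, smul_eq_mul]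
  congr 2
  push_cast
  field_simp

lemma fourierCoeff_neg_circleFun {V : ℝ → ℝ} (hper : Function.Periodic V (2 * Real.pi)) (k : ℤ) :
    fourierCoeff (circleFun hper) (-k) = (starRingEnd ℂ) (fourierCoeff (circleFun hper) k) := by
  rw [fourierCoeff, fourierCoeff, ← integral_conj]
  refine integral_congr_ae (Eventually.of_forall fun x => ?_)
  simp only [smul_eq_mul, map_mul, ← fourier_neg, circleFun, Complex.conj_ofReal]

/-- Uniqueness of Fourier coefficients for integrable functions. -/
lemma ae_eq_zero_of_fourierCoeff_eq_zero {f : TT → ℂ}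
    (hf : Integrable f AddCircle.haarAddCircle) (h : ∀ k, fourierCoeff f k = 0) :
    f =ᵐ[AddCircle.haarAddCircle] 0 := by
  have hmul : ∀ φ : C(TT, ℂ), Integrable (fun x => φ x * f x) AddCircle.haarAddCircle := fun φ =>
    hf.bdd_mul φ.continuous.aestronglyMeasurable (Eventually.of_forall φ.norm_coe_le_norm)
  have hq : ∀ q ∈ Submodule.span ℂ (Set.range (@fourier (2 * Real.pi))),
      ∫ x, q x * f x ∂AddCircle.haarAddCircle = 0 := by
    intro q hq
    induction hq using Submodule.span_induction with
    | mem x hx =>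
      obtain ⟨k, rfl⟩ := hx
      have := h (-k)
      rw [fourierCoeff, neg_neg] at this
      exact this
    | zero => simp
    | add x y _ _ hx hy =>
      simp only [ContinuousMap.add_apply, add_mul]
      rw [integral_add (hmul x) (hmul y), hx, hy, add_zero]
    | smul a x _ hx =>
      simp only [ContinuousMap.smul_apply, smul_eq_mul, mul_assoc]
      rw [integral_const_mul, hx, mul_zero]
  have hφ : ∀ φ : C(TT, ℂ), ∫ x, φ x * f x ∂AddCircle.haarAddCircle = 0 := by
    intro φ
    rw [← norm_le_zero_iff]
    refine le_of_forall_pos_le_add fun ε hε => ?_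
    have hB : 0 ≤ ∫ x, ‖f x‖ ∂AddCircle.haarAddCircle := integral_nonneg fun _ => norm_nonneg _
    set B := ∫ x, ‖f x‖ ∂AddCircle.haarAddCircle
    obtain ⟨q, hqm, hqφ⟩ := exists_trig_approx φ (div_pos hε (show 0 < B + 1 by positivity))
    rw [← sub_zero (∫ x, φ x * f x ∂AddCircle.haarAddCircle), ← hq q hqm,
      ← integral_sub (hmul φ) (hmul q)]
    calc _ ≤ ∫ x, ε / (B + 1) * ‖f x‖ ∂AddCircle.haarAddCircle := by
          refine norm_integral_le_of_norm_le (hf.norm.const_mul _) (Eventually.of_forall fun x => ?_)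
          rw [← sub_mul, norm_mul]
          exact mul_le_mul_of_nonneg_right (hqφ x).le (norm_nonneg _)
      _ = B / (B + 1) * ε := by rw [integral_const_mul]; ring
      _ ≤ 0 + ε := by
          rw [zero_add]
          exact mul_le_of_le_one_left hε.le ((div_le_one (by positivity)).2 (by linarith))
  -- Indicators of closed sets are bounded limits of continuous functions.
  refine ae_eq_zero_of_forall_setIntegral_isClosed_eq_zero hf fun C hC => ?_
  have ht : Tendsto (fun m => ∫ x, nnToC (hC.apprSeq m) x * f x ∂AddCircle.haarAddCircle) atTop
      (𝓝 (∫ x, C.indicator f x ∂AddCircle.haarAddCircle)) := by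
    refine tendsto_integral_of_dominated_convergence (fun x => ‖f x‖)
      (fun m => (hmul _).aestronglyMeasurable) hf.norm
      (fun m => Eventually.of_forall fun x => ?_) (Eventually.of_forall fun x => ?_)
    · rw [norm_mul]
      refine mul_le_of_le_one_left (norm_nonneg _) ?_
      have := HasOuterApproxClosed.apprSeq_apply_le_one hC m x
      simpa [nnToC] using this
    · have h1 := tendsto_pi_nhds.1 (HasOuterApproxClosed.tendsto_apprSeq hC) x
      have h2 : Tendsto (fun m => nnToC (hC.apprSeq m) x) atTop
          (𝓝 (((C.indicator (fun _ => (1 : ℝ≥0)) x : ℝ≥0) : ℝ) : ℂ)) :=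
        (Complex.continuous_ofReal.tendsto _).comp ((NNReal.continuous_coe.tendsto _).comp h1)
      convert h2.mul_const (f x) using 2
      by_cases hx : x ∈ C <;> simp [hx]
  simp only [hφ] at ht
  rw [← integral_indicator hC.measurableSet]
  exact tendsto_nhds_unique ht tendsto_const_nhds

/-- If the Fourier coefficients of an integrable function are square summable, the function is in
`L²` by uniqueness of Fourier coefficients, so its partial sums converge in `L²` and hence in `L¹`. -/
lemma tendsto_integral_norm_sub_partial {f : TT → ℂ} (hf : Integrable f AddCircle.haarAddCircle)
    (hs : Summable fun k : ℤ => ‖fourierCoeff f k‖ ^ 2) :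
    Tendsto (fun L : ℕ => ∫ x, ‖f x - ∑ k ∈ Finset.Icc (-L : ℤ) L, fourierCoeff f k * fourier k x‖
      ∂AddCircle.haarAddCircle) atTop (𝓝 0) := by
  have hmem : Memℓp (fourierCoeff f) 2 := by
    refine memℓp_gen ?_
    simpa using hs
  set W : Lp ℂ 2 (AddCircle.haarAddCircle : Measure TT) := fourierBasis.repr.symm ⟨_, hmem⟩ with hW
  have hWc : ∀ k, fourierCoeff W k = fourierCoeff f k := by
    intro k
    rw [← fourierBasis_repr, hW, LinearIsometryEquiv.apply_symm_apply]
  have hWi : Integrable W (AddCircle.haarAddCircle : Measure TT) :=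
    (Lp.memLp W).integrable (by norm_num)
  have hfW : f =ᵐ[AddCircle.haarAddCircle] W := by
    have h := ae_eq_zero_of_fourierCoeff_eq_zero (hf.sub hWi) (fun k => by
      have h1 := hWc k
      rw [fourierCoeff, fourierCoeff] at h1
      simp only [fourierCoeff, Pi.sub_apply, smul_sub]
      rw [integral_sub (hf.fourier_smul _) (hWi.fourier_smul _), h1, sub_self])
    filter_upwards [h] with x hx
    exact sub_eq_zero.1 hx
  have hsum := (hasSum_fourier_series_L2 W).comp (Finset.tendsto_Icc_neg (R := ℤ))
  have hnorm := (tendsto_iff_norm_sub_tendsto_zero.1 hsum)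
  refine squeeze_zero (fun L => integral_nonneg fun x => norm_nonneg _) (fun L => ?_) hnorm
  set P : Lp ℂ 2 (AddCircle.haarAddCircle : Measure TT) :=
    ∑ k ∈ Finset.Icc (-L : ℤ) L, fourierCoeff W k • fourierLp 2 k with hP
  have hPc : P =ᵐ[AddCircle.haarAddCircle]
      fun x => ∑ k ∈ Finset.Icc (-L : ℤ) L, fourierCoeff f k * fourier k x := by
    have h1 : P =ᵐ[AddCircle.haarAddCircle] fun x => ∑ k ∈ Finset.Icc (-L : ℤ) L,
        (fourierCoeff W k • fourierLp (T := 2 * Real.pi) 2 k : Lp ℂ 2 _) x :=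
      Lp.coeFn_fun_finsetSum _ _
    have h2 : ∀ᵐ x ∂(AddCircle.haarAddCircle : Measure TT), ∀ k : ℤ,
        (fourierCoeff W k • fourierLp (T := 2 * Real.pi) 2 k : Lp ℂ 2 _) x =
          fourierCoeff f k * fourier k x := by
      refine ae_all_iff.2 fun k => ?_
      filter_upwards [Lp.coeFn_smul (fourierCoeff W k) (fourierLp (T := 2 * Real.pi) 2 k),
        coeFn_fourierLp (T := 2 * Real.pi) 2 k] with x hx1 hx2
      rw [hx1, Pi.smul_apply, hx2, hWc, smul_eq_mul]
    filter_upwards [h1, h2] with x hx1 hx2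
    rw [hx1]
    exact Finset.sum_congr rfl fun k _ => hx2 k
  have hPW : ∀ᵐ x ∂(AddCircle.haarAddCircle : Measure TT),
      ‖f x - ∑ k ∈ Finset.Icc (-L : ℤ) L, fourierCoeff f k * fourier k x‖ = ‖(P - W : Lp _ _ _) x‖ := by
    filter_upwards [hPc, hfW, Lp.coeFn_sub P W] with x h1 h2 h3
    rw [h3, Pi.sub_apply, h1, h2, norm_sub_rev]
  rw [integral_congr_ae hPW]
  change _ ≤ ‖P - W‖
  rw [Lp.norm_def, integral_norm_eq_lintegral_enorm (Lp.aestronglyMeasurable _),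
    ← eLpNorm_one_eq_lintegral_enorm]
  exact ENNReal.toReal_mono (Lp.eLpNorm_ne_top _)
    (eLpNorm_le_eLpNorm_of_exponent_le (by norm_num) (Lp.aestronglyMeasurable _))

section
variable {n : ℕ}

lemma aemeasurable_sum_eigAngle (μ : Measure (UG n)) [IsProbabilityMeasure μ]
    (hinv : ∀ g : UG n, Measure.map (fun x => g * x) μ = μ) {f : TT → ℝ}
    (hf : AEMeasurable f AddCircle.haarAddCircle) :
    AEMeasurable (fun g : UG n => ∑ i, f (eigAngle g i)) μ := by
  refine ⟨_, measurable_sum_eigAngle hf.measurable_mk, ?_⟩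
  filter_upwards [ae_forall_eigAngle μ hinv hf.ae_eq_mk] with g hg
  exact Finset.sum_congr rfl fun i _ => hg i

lemma aemeasurable_linearStatistic {V : ℝ → ℝ} (hper : Function.Periodic V (2 * Real.pi))
    (hint : IntervalIntegrable V volume (-Real.pi) Real.pi)
    (μ : Measure (UG n)) [IsProbabilityMeasure μ]
    (hinv : ∀ g : UG n, Measure.map (fun x => g * x) μ = μ) :
    AEMeasurable (fun g : UG n => linearStatistic V g) μ := by
  simp only [linearStatistic_eq hper]
  refine aemeasurable_sum_eigAngle μ hinv ?_
  have := (integrable_circleFun hper hint).re.aemeasurable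
  simpa [circleFun] using this

lemma trigStat_eq_sum (S : Finset ℤ) (a : ℤ → ℂ) (g : UG n) :
    trigStat S a g = ∑ i, ∑ k ∈ S, a k * fourier k (eigAngle g i) := by
  rw [Finset.sum_comm, trigStat]
  simp only [pz_eq_sum, Finset.mul_sum]

/-- The frequencies `0 < |k| ≤ L`. -/
noncomputable def freq (L : ℕ) : Finset ℤ := (Finset.Icc (-L : ℤ) L).erase 0

/-- The statistic of `V` differs in `L¹` from that of its Fourier truncation at `K` by at most the
square root of the tail `∑_{|k| > K} |k| |V_k|²`, for every `n ≥ 1`. For a truncation at `L ≥ K` in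
place of `V` this is the variance bound; the limit `L → ∞` for fixed `n` uses that the mean
eigenvalue measure is `n` times Haar measure. -/
lemma integral_norm_linearStatistic_sub_le {V : ℝ → ℝ} (hper : Function.Periodic V (2 * Real.pi))
    (hint : IntervalIntegrable V volume (-Real.pi) Real.pi)
    (hsum : Summable fun k : ℤ => |(k : ℝ)| * ‖fourierCoeff (circleFun hper) k‖ ^ 2)
    (h0 : fourierCoeff (circleFun hper) 0 = 0) (hn : n ≠ 0)
    (μ : Measure (UG n)) [IsProbabilityMeasure μ]
    (hinv : ∀ g : UG n, Measure.map (fun x => g * x) μ = μ) (K : ℕ) :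
    Integrable (fun g : UG n => (linearStatistic V g : ℂ)) μ ∧
    ∫ g : UG n, ‖(linearStatistic V g : ℂ) - trigStat (freq K) (fourierCoeff (circleFun hper)) g‖ ∂μ ≤
      Real.sqrt (∑' k : ℤ, |(k : ℝ)| * ‖fourierCoeff (circleFun hper) k‖ ^ 2 -
        ∑ k ∈ freq K, |(k : ℝ)| * ‖fourierCoeff (circleFun hper) k‖ ^ 2) := by
  set f := circleFun hper with hfdef
  set c := fourierCoeff f with hc
  have hf : Integrable f AddCircle.haarAddCircle := integrable_circleFun hper hint
  have hsq : Summable fun k : ℤ => ‖c k‖ ^ 2 := by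
    refine hsum.of_nonneg_of_le (fun _ => by positivity) fun k => ?_
    rcases eq_or_ne k 0 with rfl | hk
    · simp [h0]
    · refine le_mul_of_one_le_left (by positivity) ?_
      exact_mod_cast Int.one_le_abs hk
  set F : UG n → ℂ := fun g => (linearStatistic V g : ℂ) with hF
  have hFm : AEStronglyMeasurable F μ :=
    (aemeasurable_linearStatistic hper hint μ hinv).complex_ofReal.aestronglyMeasurable
  have hTi : ∀ S, Integrable (fun g : UG n => trigStat S c g) μ := fun S =>
    integrable_UG μ continuous_trigStat
  have hP : ∀ L : ℕ, Integrable (fun x => f x - ∑ k ∈ Finset.Icc (-L : ℤ) L, c k * fourier k x)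
      AddCircle.haarAddCircle := fun L =>
    hf.sub (Continuous.integrable_of_hasCompactSupport (by fun_prop)
      (HasCompactSupport.of_compactSpace _))
  have hlin : ∀ L : ℕ, ∫⁻ g, ‖F g - trigStat (freq L) c g‖ₑ ∂μ ≤
      n * ∫⁻ x, ‖f x - ∑ k ∈ Finset.Icc (-L : ℤ) L, c k * fourier k x‖ₑ
        ∂AddCircle.haarAddCircle := by
    intro L
    rw [← lintegral_sum_eigAngle μ hinv (hP L).aemeasurable.enorm]
    refine lintegral_mono fun g => ?_
    have : F g - trigStat (freq L) c g =
        ∑ i, (f (eigAngle g i) - ∑ k ∈ Finset.Icc (-L : ℤ) L, c k * fourier k (eigAngle g i)) := by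
      rw [trigStat_eq_sum, Finset.sum_sub_distrib]
      congr 1
      · simp only [hF, linearStatistic_eq hper, Complex.ofReal_sum]
        rfl
      · refine Finset.sum_congr rfl fun i _ => ?_
        rw [freq, Finset.sum_erase _ (by rw [h0, zero_mul])]
    rw [this]
    exact enorm_sum_le _ _
  have hi : ∀ L, Integrable (fun g => F g - trigStat (freq L) c g) μ := fun L =>
    ⟨hFm.sub (hTi _).aestronglyMeasurable, (hlin L).trans_lt
      (ENNReal.mul_lt_top (by simp) (hP L).2)⟩
  have hFi : Integrable F μ := by
    have := (hi 0).add (hTi (freq 0))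
    refine this.congr (Eventually.of_forall fun g => ?_)
    simp
  refine ⟨hFi, ?_⟩
  have hreal : ∀ L : ℕ, ∫ g, ‖F g - trigStat (freq L) c g‖ ∂μ ≤
      n * ∫ x, ‖f x - ∑ k ∈ Finset.Icc (-L : ℤ) L, c k * fourier k x‖
        ∂AddCircle.haarAddCircle := by
    intro L
    rw [integral_norm_eq_lintegral_enorm (hi L).1, integral_norm_eq_lintegral_enorm (hP L).1,
      ← ENNReal.toReal_natCast, ← ENNReal.toReal_mul]
    exact ENNReal.toReal_mono (ENNReal.mul_ne_top (by simp) (hP L).2.ne) (hlin L)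
  have hlim := (tendsto_integral_norm_sub_partial hf hsq).const_mul (n : ℝ)
  rw [mul_zero] at hlim
  have hlim2 := hlim.add_const (Real.sqrt (∑' k : ℤ, |(k : ℝ)| * ‖c k‖ ^ 2 -
        ∑ k ∈ freq K, |(k : ℝ)| * ‖c k‖ ^ 2))
  rw [zero_add] at hlim2
  refine ge_of_tendsto hlim2 ?_
  filter_upwards [eventually_ge_atTop K] with L hL
  have hsub : freq K ⊆ freq L := Finset.erase_subset_erase _ (Finset.Icc_subset_Icc (by omega) (by omega))
  have hdiff : ∀ g : UG n, trigStat (freq L) c g - trigStat (freq K) c g =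
      trigStat (freq L \ freq K) c g := by
    intro g
    rw [sub_eq_iff_eq_add, trigStat, trigStat, trigStat, Finset.sum_sdiff hsub]
  have hvar : ∫ g : UG n, ‖trigStat (freq L \ freq K) c g‖ ∂μ ≤
      Real.sqrt (∑' k : ℤ, |(k : ℝ)| * ‖c k‖ ^ 2 - ∑ k ∈ freq K, |(k : ℝ)| * ‖c k‖ ^ 2) := by
    refine Real.le_sqrt_of_sq_le ?_
    have h1 : (∫ g : UG n, ‖trigStat (freq L \ freq K) c g‖ ∂μ) ^ 2 ≤
        ∫ g : UG n, ‖trigStat (freq L \ freq K) c g‖ ^ 2 ∂μ := by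
      set N : UG n → ℝ := fun g => ‖trigStat (freq L \ freq K) c g‖ with hN
      have hNc : Continuous N := continuous_trigStat.norm
      have hi1 : Integrable N μ := hNc.integrable_of_hasCompactSupport (HasCompactSupport.of_compactSpace _)
      have hi2 : Integrable (fun g => N g ^ 2) μ := (hNc.pow 2).integrable_of_hasCompactSupport (HasCompactSupport.of_compactSpace _)
      have hpos : 0 ≤ ∫ g, (N g - ∫ x, N x ∂μ) ^ 2 ∂μ := integral_nonneg fun g => sq_nonneg _
      have hexp : ∀ g, (N g - ∫ x, N x ∂μ) ^ 2 =
          N g ^ 2 - 2 * (∫ x, N x ∂μ) * N g + (∫ x, N x ∂μ) ^ 2 := fun g => by ring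
      have hi3 : Integrable (fun g => 2 * (∫ x, N x ∂μ) * N g) μ := hi1.const_mul _
      have hi4 : Integrable (fun g => N g ^ 2 - 2 * (∫ x, N x ∂μ) * N g) μ := hi2.sub hi3
      simp only [hexp] at hpos
      rw [integral_add hi4 (integrable_const _), integral_sub hi2 hi3, integral_const_mul,
        integral_const] at hpos
      simp only [probReal_univ, one_smul] at hpos
      nlinarith
    refine h1.trans ((integral_norm_trigStat_sq_le hn μ hinv (by simp [freq])).trans ?_)
    rw [le_sub_iff_add_le, Finset.sum_sdiff hsub]
    exact hsum.sum_le_tsum _ fun _ _ => by positivity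
  calc ∫ g, ‖F g - trigStat (freq K) c g‖ ∂μ ≤ ∫ g, (‖F g - trigStat (freq L) c g‖ +
        ‖trigStat (freq L \ freq K) c g‖) ∂μ := by
        refine integral_mono (hi K).norm ((hi L).norm.add (hTi _).norm) fun g => ?_
        simp only [← hdiff]
        exact norm_sub_le_norm_sub_add_norm_sub _ _ _
    _ ≤ _ := by
        rw [integral_add (hi L).norm (hTi _).norm]
        exact add_le_add (hreal L) hvar

end

/-! ### Convergence in distribution -/

/-- The coefficients of a real function give equal contributions at `k` and `-k`. -/
lemma tsum_abs_mul_eq {c : ℤ → ℂ} (hc : ∀ k, c (-k) = (starRingEnd ℂ) (c k))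
    (hs : Summable fun k : ℤ => |(k : ℝ)| * ‖c k‖ ^ 2) :
    ∑' k : ℤ, |(k : ℝ)| * ‖c k‖ ^ 2 = 2 * ∑' k : ℕ, ((k + 1 : ℕ) : ℝ) * ‖c ((k : ℤ) + 1)‖ ^ 2 := by
  obtain ⟨f, hf⟩ : ∃ f : ℤ → ℝ, ∀ k, f k = |(k : ℝ)| * ‖c k‖ ^ 2 := ⟨_, fun _ => rfl⟩
  simp only [← hf] at hs ⊢
  have hinj : Function.Injective fun k : ℕ => -((k : ℤ) + 1) := fun a b h => by
    simp only at h; omega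
  have h1 : Summable fun k : ℕ => f k := hs.comp_injective Nat.cast_injective
  have h2 : Summable fun k : ℕ => f (-((k : ℤ) + 1)) := hs.comp_injective hinj
  have e : ∀ k : ℕ, ((k + 1 : ℕ) : ℝ) * ‖c ((k : ℤ) + 1)‖ ^ 2 = f ((k : ℤ) + 1) := fun k => by
    rw [hf, abs_of_nonneg (by positivity)]
    push_cast
    ring
  rw [tsum_of_nat_of_neg_add_one h1 h2, h1.tsum_eq_zero_add, two_mul]
  simp only [e]
  congr 1
  · rw [hf]
    simp
  · refine tsum_congr fun k => ?_
    rw [hf, hf, hc, RCLike.norm_conj, Int.cast_neg, abs_neg]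

lemma tendsto_sum_freq {c : ℤ → ℂ} (hs : Summable fun k : ℤ => |(k : ℝ)| * ‖c k‖ ^ 2) :
    Tendsto (fun L => ∑ k ∈ freq L, |(k : ℝ)| * ‖c k‖ ^ 2) atTop
      (𝓝 (∑' k : ℤ, |(k : ℝ)| * ‖c k‖ ^ 2)) := by
  have h := hs.hasSum.comp (Finset.tendsto_Icc_neg (R := ℤ))
  refine h.congr fun L => ?_
  simp only [Function.comp, freq]
  rw [Finset.sum_erase _ (by simp)]

/-- Convergence of characteristic functions: truncate at a frequency `K`, let `n → ∞`, and then let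
`K → ∞`. -/
lemma tendsto_charFun_linearStatistic {V : ℝ → ℝ} (hper : Function.Periodic V (2 * Real.pi))
    (hint : IntervalIntegrable V volume (-Real.pi) Real.pi)
    (hsum : Summable fun k : ℤ => |(k : ℝ)| * ‖fourierCoeff (circleFun hper) k‖ ^ 2)
    (h0 : fourierCoeff (circleFun hper) 0 = 0)
    (μ : ∀ n : ℕ, Measure (UG n)) [∀ n, IsProbabilityMeasure (μ n)]
    (hinv : ∀ (n : ℕ) (g : UG n), Measure.map (fun x => g * x) (μ n) = μ n) (t : ℝ) :
    Tendsto (fun n => ∫ g : UG n, Complex.exp (t * (linearStatistic V g : ℝ) * Complex.I) ∂μ n) atTop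
      (𝓝 ((Real.exp (-(t ^ 2 * (∑' k : ℤ, |(k : ℝ)| * ‖fourierCoeff (circleFun hper) k‖ ^ 2) / 2)) :
        ℝ) : ℂ)) := by
  set c := fourierCoeff (circleFun hper) with hc
  set σ := ∑' k : ℤ, |(k : ℝ)| * ‖c k‖ ^ 2 with hσ
  have hconj : ∀ k, c (-k) = (starRingEnd ℂ) (c k) := fourierCoeff_neg_circleFun hper
  have hS0 : ∀ K, (0 : ℤ) ∉ freq K := fun K => by simp [freq]
  have hS : ∀ K, ∀ k ∈ freq K, -k ∈ freq K := fun K k hk => by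
    simp only [freq, Finset.mem_erase, Finset.mem_Icc] at hk ⊢
    omega
  set s : ℕ → ℝ := fun K => ∑ k ∈ freq K, |(k : ℝ)| * ‖c k‖ ^ 2 with hs
  have hslim : Tendsto s atTop (𝓝 σ) := tendsto_sum_freq hsum
  -- The truncation error is bounded uniformly in `n`.
  have htrunc : ∀ K n, n ≠ 0 →
      ‖∫ g : UG n, Complex.exp (t * (linearStatistic V g : ℝ) * Complex.I) ∂μ n -
        ∫ g, Complex.exp (Complex.I * t * trigStat (freq K) c g) ∂μ n‖ ≤
      |t| * Real.sqrt (σ - s K) := by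
    intro K n hn
    obtain ⟨hFi, hle⟩ := integral_norm_linearStatistic_sub_le hper hint hsum h0 hn (μ n) (hinv n) K
    have hTi : Integrable (fun g : UG n => trigStat (freq K) c g) (μ n) :=
      integrable_UG _ continuous_trigStat
    have hEi : Integrable (fun g : UG n => Complex.exp (Complex.I * t * trigStat (freq K) c g))
        (μ n) :=
      integrable_UG _ (Complex.continuous_exp.comp (continuous_const.mul continuous_trigStat))
    have hGi : Integrable
        (fun g : UG n => Complex.exp (t * (linearStatistic V g : ℝ) * Complex.I)) (μ n) := by
      refine Integrable.of_bound (C := 1) ?_ (Eventually.of_forall fun g => ?_)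
      · exact Complex.continuous_exp.comp_aestronglyMeasurable
          ((hFi.aestronglyMeasurable.const_mul _).mul_const _)
      · rw [← Complex.ofReal_mul, Complex.norm_exp_ofReal_mul_I]
    rw [← integral_sub hGi hEi]
    refine (norm_integral_le_integral_norm _).trans ?_
    refine le_trans ?_ (mul_le_mul_of_nonneg_left hle (abs_nonneg t))
    rw [← integral_const_mul]
    refine integral_mono (hGi.sub hEi).norm ((hFi.sub hTi).norm.const_mul _) fun g => ?_
    obtain ⟨x, hx⟩ := Complex.conj_eq_iff_real.1 (conj_trigStat (hS K) hconj g)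
    simp only
    rw [hx]
    have e1 : Complex.exp (t * (linearStatistic V g : ℝ) * Complex.I) -
        Complex.exp (Complex.I * t * x) = Complex.exp ((t * x : ℝ) * Complex.I) *
          (Complex.exp (Complex.I * (t * (linearStatistic V g - x) : ℝ)) - 1) := by
      rw [mul_sub, ← Complex.exp_add, mul_one]
      congr 2 <;> push_cast <;> ring
    rw [e1, norm_mul, Complex.norm_exp_ofReal_mul_I, one_mul]
    refine (Real.norm_exp_I_mul_ofReal_sub_one_le).trans ?_
    rw [norm_mul, ← Complex.ofReal_sub, Complex.norm_real, Real.norm_eq_abs]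
  have hgauss : ∀ K, Tendsto
      (fun n => ∫ g : UG n, Complex.exp (Complex.I * t * trigStat (freq K) c g) ∂μ n) atTop
      (𝓝 ((Real.exp (-(t ^ 2 * s K / 2)) : ℝ) : ℂ)) := by
    intro K
    rw [tendsto_iff_norm_sub_tendsto_zero]
    have hb : Tendsto (fun n : ℕ => |t| * (((∑ k ∈ freq K, ‖c k‖ * steinConst (freq K) c k) *
        (1 + |t|)) / (n : ℝ))) atTop (𝓝 0) := by
      simpa using (tendsto_const_div_atTop_nhds_zero_nat
        ((∑ k ∈ freq K, ‖c k‖ * steinConst (freq K) c k) * (1 + |t|))).const_mul |t|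
    refine squeeze_zero' (Eventually.of_forall fun _ => norm_nonneg _) ?_ hb
    filter_upwards [eventually_ne_atTop 0] with n hn
    exact charFun_trigStat (freq K) c (hS0 K) (hS K) hconj hn (μ n) (hinv n) t
  rw [Metric.tendsto_atTop']
  intro ε hε
  have hl1 : Tendsto (fun K => |t| * Real.sqrt (σ - s K)) atTop (𝓝 0) := by
    have := ((hslim.const_sub σ).sqrt).const_mul |t|
    simpa using this
  have hl2 : Tendsto (fun K => ((Real.exp (-(t ^ 2 * s K / 2)) : ℝ) : ℂ)) atTop
      (𝓝 ((Real.exp (-(t ^ 2 * σ / 2)) : ℝ) : ℂ)) := by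
    refine (Complex.continuous_ofReal.tendsto _).comp ((Real.continuous_exp.tendsto _).comp ?_)
    exact ((hslim.const_mul _).div_const 2).neg
  obtain ⟨K, hK1, hK2⟩ := ((hl1.eventually (gt_mem_nhds (show (0 : ℝ) < ε / 3 by positivity))).and
    (hl2.eventually (Metric.ball_mem_nhds _ (show (0 : ℝ) < ε / 3 by positivity)))).exists
  have hK3 := (hgauss K).eventually (Metric.ball_mem_nhds _ (show (0 : ℝ) < ε / 3 by positivity))
  obtain ⟨N, hN⟩ := eventually_atTop.1 (hK3.and (eventually_ne_atTop 0))
  refine ⟨N, fun n hn => ?_⟩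
  obtain ⟨hn1, hn0⟩ := hN n hn.le
  have hn2 := htrunc K n hn0
  rw [← dist_eq_norm] at hn2
  refine (dist_triangle4 _ _ _ _).trans_lt (lt_of_lt_of_le
    (add_lt_add (add_lt_add (hn2.trans_lt hK1) hn1) hK2) (by linarith))

end

/-- **Johansson's central limit theorem for linear statistics on `U(n)`.** If `V` is a
real-valued integrable symbol with `∑_k |k| |V_k|² < ∞` and `V_0 = 0`, then with respect
to the normalized Haar measures (characterized as left-invariant probability measures)
on `U(n)`, the laws of `F_n(g) = ∑_j V(e^{iθ_j(g)})` converge weakly to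
`N(0, σ²)` with `σ² = 2 ∑_{k≥1} k |V_k|²`. -/
theorem johansson_clt
    (V : ℝ → ℝ) (hper : Function.Periodic V (2 * Real.pi))
    (hint : IntervalIntegrable V volume (-Real.pi) Real.pi)
    (hsum : Summable (fun k : ℤ =>
      (|k| : ℝ) * ‖fourierCoeff' (fun θ => (V θ : ℂ)) k‖ ^ 2))
    (hV0 : (2 * Real.pi)⁻¹ * ∫ θ in (-Real.pi)..Real.pi, V θ = 0)
    (μ : ∀ n : ℕ, Measure (Matrix.unitaryGroup (Fin n) ℂ))
    (hprob : ∀ n : ℕ, IsProbabilityMeasure (μ n))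
    (hinv : ∀ (n : ℕ) (g : Matrix.unitaryGroup (Fin n) ℂ),
      Measure.map (fun x => g * x) (μ n) = μ n) :
    ∀ f : BoundedContinuousFunction ℝ ℝ,
      Tendsto (fun n : ℕ => ∫ g, f (linearStatistic V g) ∂(μ n))
        atTop
        (𝓝 (∫ x, f x ∂(ProbabilityTheory.gaussianReal 0
          (Real.toNNReal (2 * ∑' k : ℕ, ((k + 1 : ℕ) : ℝ) *
            ‖fourierCoeff' (fun θ => (V θ : ℂ)) ((k : ℤ) + 1)‖ ^ 2))))) := by
  simp only [← fourierCoeff_circleFun hper] at hsum ⊢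
  have hsum' : Summable fun k : ℤ => |(k : ℝ)| * ‖fourierCoeff (circleFun hper) k‖ ^ 2 := by
    simpa using hsum
  have h0 : fourierCoeff (circleFun hper) 0 = 0 := by
    rw [fourierCoeff_circleFun, fourierCoeff']
    simp only [Int.cast_zero, mul_zero, zero_mul, Complex.exp_zero, one_mul]
    rw [intervalIntegral.integral_ofReal]
    exact_mod_cast hV0
  rw [← tsum_abs_mul_eq (fourierCoeff_neg_circleFun hper) hsum']
  have hm : ∀ n, AEMeasurable (fun g : UG n => linearStatistic V g) (μ n) := fun n =>
    aemeasurable_linearStatistic hper hint (μ n) (hinv n)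
  set σ := ∑' k : ℤ, |(k : ℝ)| * ‖fourierCoeff (circleFun hper) k‖ ^ 2 with hσ
  have hσ0 : 0 ≤ σ := tsum_nonneg fun _ => by positivity
  let law : ℕ → ProbabilityMeasure ℝ := fun n =>
    ⟨Measure.map (fun g : UG n => linearStatistic V g) (μ n), Measure.isProbabilityMeasure_map (hm n)⟩
  let G : ProbabilityMeasure ℝ := ⟨ProbabilityTheory.gaussianReal 0 σ.toNNReal, inferInstance⟩
  have hlim : Tendsto law atTop (𝓝 G) := by
    refine ProbabilityMeasure.tendsto_iff_tendsto_charFun.2 fun t => ?_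
    have h := tendsto_charFun_linearStatistic hper hint hsum' h0 μ hinv t
    have e1 : charFun (G : Measure ℝ) t = ((Real.exp (-(t ^ 2 * σ / 2)) : ℝ) : ℂ) := by
      change charFun (ProbabilityTheory.gaussianReal 0 σ.toNNReal) t = _
      rw [ProbabilityTheory.charFun_gaussianReal, Complex.ofReal_exp]
      congr 1
      rw [Real.coe_toNNReal _ hσ0]
      push_cast
      ring
    rw [e1]
    refine h.congr fun n => ?_
    change _ = charFun (Measure.map (fun g : UG n => linearStatistic V g) (μ n)) t
    rw [charFun_apply_real, integral_map (hm n)]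
    exact (by fun_prop : Continuous fun x : ℝ => Complex.exp (t * x * Complex.I)).aestronglyMeasurable
  intro f
  have h := ProbabilityMeasure.tendsto_iff_forall_integral_tendsto.1 hlim f
  refine h.congr fun n => ?_
  exact integral_map (hm n) f.continuous.aestronglyMeasurable
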